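/- arXiv:2208.12182 — 7 statements merged into one kernel-verified Lean document; each statement's English description precedes it below -/
import Mathlib

section
/- Let n be a positive integer, let a_1,…,a_n be positive integers, and define P(x) = ∏_{i=1}^{n} cos(2π a_i x)². Then 2 · ∫_ℝ (sin(2πx)/(2πx))² · P(x) dx = ∫_0^1 (1 + cos(2πx)) · P(x) dx. -/
open Real MeasureTheory Finset

/-- The factor `sin(2πx)/(2πx)`, interpreted as its limit value `1` at `x = 0`. -/
noncomputable def sinc2pi (x : ℝ) : ℝ :=
  if x = 0 then 1 else Real.sin (2 * π * x) / (2 * π * x)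

/-!
The interval `(0, T]` tiles the line under translation by multiples of `T`, so integrating a
`T`-periodic `f` against a nonnegative weight `w` folds to `∫ x in 0..T, (∑ₙ w (x + n T)) • f x`.
For `w x = sinc (π x / T) ^ 2` the folded weight is identically `1`: since `sinc (π (x - n))` is the
`n`-th Fourier coefficient of `t ↦ exp (2π i x t)` on `(-1/2, 1/2]`, this is Parseval's identity for
a function of modulus `1`. The product of squared cosines has period `T = 1/2`, for which `w` is the
square of `sin (2πx) / (2πx)`, and against it the half-period antiperiodic `cos (2πx)` integrates to
`0` over `[0, 1]`.
-/

section Unfolding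

variable {G α E : Type*} [AddGroup G] [AddAction G α] [MeasurableSpace α] [Countable G]
  [MeasurableConstVAdd G α] {μ : Measure α} [VAddInvariantMeasure G α μ] {s : Set α}
  [NormedAddCommGroup E]

theorem lintegral_mul_eq_setLIntegral_tsum_vadd_mul (hs : IsAddFundamentalDomain G s μ)
    {w f : α → ENNReal} (hw : Measurable w) (hf : AEMeasurable f (μ.restrict s))
    (hf_inv : ∀ (g : G) x, f (g +ᵥ x) = f x) :
    ∫⁻ x, w x * f x ∂μ = ∫⁻ x in s, (∑' g : G, w (g +ᵥ x)) * f x ∂μ := by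
  simp_rw [hs.lintegral_eq_tsum'', hf_inv, ← ENNReal.tsum_mul_right]
  exact (lintegral_tsum fun g => (hw.comp (measurable_const_vadd g)).aemeasurable.mul hf).symm

theorem aestronglyMeasurable_of_restrict_fundamentalDomain (hs : IsAddFundamentalDomain G s μ)
    {f : α → E} (hf_inv : ∀ (g : G) x, f (g +ᵥ x) = f x)
    (hf : AEStronglyMeasurable f (μ.restrict s)) : AEStronglyMeasurable f μ := by
  rw [← hs.sum_restrict, aestronglyMeasurable_sum_measure_iff]
  exact fun g => (hs.aestronglyMeasurable_on_iff (hs.vadd g) hf_inv).1 hf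

variable [NormedSpace ℝ E] {w : α → ℝ} {f : α → E}

theorem integrable_smul_of_hasSum_vadd_one (hs : IsAddFundamentalDomain G s μ)
    (hw : Measurable w) (hw_nonneg : 0 ≤ w) (hw_sum : ∀ x, HasSum (fun g : G => w (g +ᵥ x)) 1)
    (hf_inv : ∀ (g : G) x, f (g +ᵥ x) = f x) (hf : IntegrableOn f s μ) :
    Integrable (fun x => w x • f x) μ := by
  have hw_tsum (x : α) : ∑' g : G, ‖w (g +ᵥ x)‖ₑ = 1 := by
    simp_rw [Real.enorm_of_nonneg (hw_nonneg _)]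
    rw [← ENNReal.ofReal_tsum_of_nonneg (fun _ => hw_nonneg _) (hw_sum x).summable,
      (hw_sum x).tsum_eq, ENNReal.ofReal_one]
  refine ⟨hw.aestronglyMeasurable.smul
    (aestronglyMeasurable_of_restrict_fundamentalDomain hs hf_inv hf.1), ?_⟩
  calc ∫⁻ x, ‖w x • f x‖ₑ ∂μ = ∫⁻ x, ‖w x‖ₑ * ‖f x‖ₑ ∂μ := by simp_rw [enorm_smul]
    _ = ∫⁻ x in s, (∑' g : G, ‖w (g +ᵥ x)‖ₑ) * ‖f x‖ₑ ∂μ :=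
      lintegral_mul_eq_setLIntegral_tsum_vadd_mul hs hw.enorm hf.1.enorm
        fun g x => by rw [hf_inv]
    _ = ∫⁻ x in s, ‖f x‖ₑ ∂μ := by simp_rw [hw_tsum, one_mul]
    _ < ⊤ := hf.2

theorem integral_smul_eq_setIntegral_of_hasSum_vadd_one (hs : IsAddFundamentalDomain G s μ)
    (hw : Measurable w) (hw_nonneg : 0 ≤ w) (hw_sum : ∀ x, HasSum (fun g : G => w (g +ᵥ x)) 1)
    (hf_inv : ∀ (g : G) x, f (g +ᵥ x) = f x) (hf : IntegrableOn f s μ) :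
    ∫ x, w x • f x ∂μ = ∫ x in s, f x ∂μ := by
  have hwf := integrable_smul_of_hasSum_vadd_one hs hw hw_nonneg hw_sum hf_inv hf
  have hw_enorm_tsum : ∑' g : G, ∫⁻ x in s, ‖w (g +ᵥ x) • f (g +ᵥ x)‖ₑ ∂μ ≠ ⊤ := by
    rw [← hs.lintegral_eq_tsum'' fun x => ‖w x • f x‖ₑ]
    exact hwf.2.ne
  calc ∫ x, w x • f x ∂μ = ∑' g : G, ∫ x in s, w (g +ᵥ x) • f (g +ᵥ x) ∂μ :=
        hs.integral_eq_tsum'' _ hwf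
    _ = ∫ x in s, ∑' g : G, w (g +ᵥ x) • f (g +ᵥ x) ∂μ := by
        refine (integral_tsum (fun g => ?_) hw_enorm_tsum).symm
        simp_rw [hf_inv]
        exact (hw.comp (measurable_const_vadd g)).aestronglyMeasurable.smul hf.1
    _ = ∫ x in s, f x ∂μ := by
        simp_rw [hf_inv, fun x => ((hw_sum x).smul_const (f x)).tsum_eq, one_smul]

end Unfolding

section Sinc

theorem integral_exp_mul_mul_I_eq_sinc (c r : ℝ) :
    ∫ t in -r..r, Complex.exp ((c * t : ℝ) * Complex.I) = 2 * r * Real.sinc (c * r) := by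
  rcases eq_or_ne c 0 with rfl | hc
  · norm_num [two_mul]
  have hrescale := intervalIntegral.integral_comp_mul_left (a := -r) (b := r)
    (fun t : ℝ => Complex.exp (t * Complex.I)) hc
  rw [hrescale, mul_neg, integral_exp_mul_I_eq_sinc, Complex.real_smul]
  push_cast
  have : (c : ℂ) ≠ 0 := by exact_mod_cast hc
  field_simp

theorem fourierCoeffOn_exp_two_pi_mul_I (x : ℝ) (n : ℤ) :
    fourierCoeffOn (show (-(1 / 2) : ℝ) < 1 / 2 by norm_num)
        (fun t : ℝ => Complex.exp ((2 * π * x * t : ℝ) * Complex.I)) n =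
      Real.sinc (π * (x - n)) := by
  rw [fourierCoeffOn_eq_integral]
  have hlength : (1 / 2 - -(1 / 2) : ℝ) = 1 := by norm_num
  have hexp (t : ℝ) : fourier (-n) (t : AddCircle (1 / 2 - -(1 / 2) : ℝ)) •
      Complex.exp ((2 * π * x * t : ℝ) * Complex.I) =
        Complex.exp ((2 * π * (x - n) * t : ℝ) * Complex.I) := by
    rw [fourier_coe_apply, smul_eq_mul, ← Complex.exp_add, hlength]
    congr 1
    push_cast
    ring
  have hphase : 2 * π * (x - n) * (1 / 2) = π * (x - n) := by ring
  simp_rw [hexp, hlength, integral_exp_mul_mul_I_eq_sinc, hphase]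
  norm_num

theorem hasSum_sinc_sq_pi_mul_add_int (x : ℝ) :
    HasSum (fun n : ℤ => Real.sinc (π * (x + n)) ^ 2) 1 := by
  set e : ℝ → ℂ := fun t => Complex.exp ((2 * π * x * t : ℝ) * Complex.I)
  have he_norm (t : ℝ) : ‖e t‖ = 1 := Complex.norm_exp_ofReal_mul_I _
  have he_memLp : MemLp e 2 (volume.restrict (Set.Ioc (-(1 / 2)) (1 / 2))) :=
    MemLp.of_bound (Continuous.aestronglyMeasurable (by fun_prop)) 1
      (Filter.Eventually.of_forall fun t => (he_norm t).le)
  have hparseval := hasSum_sq_fourierCoeffOn (by norm_num) he_memLp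
  simp_rw [he_norm, e, fourierCoeffOn_exp_two_pi_mul_I] at hparseval
  rw [← (Equiv.neg ℤ).hasSum_iff]
  convert hparseval using 1
  · ext n
    simp [sub_eq_add_neg]
  · norm_num

end Sinc

section Periodic

variable {E : Type*} [NormedAddCommGroup E] [NormedSpace ℝ E] {f : ℝ → E} {T : ℝ}

theorem intervalIntegral_eq_zero_of_antiperiodic (hf : Function.Antiperiodic f T) (t : ℝ) :
    ∫ x in t..t + 2 * T, f x = 0 := by
  have : IsAddTorsionFree E := .of_isTorsionFree ℝ E
  refine self_eq_neg.mp ?_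
  calc ∫ x in t..t + 2 * T, f x = ∫ x in t + T..t + T + 2 * T, f x :=
        hf.periodic_two_mul.intervalIntegral_add_eq t (t + T)
    _ = ∫ x in t..t + 2 * T, f (x + T) := by
        rw [intervalIntegral.integral_comp_add_right, add_right_comm]
    _ = -∫ x in t..t + 2 * T, f x := by
        simp_rw [hf _, intervalIntegral.integral_neg]

theorem integral_smul_eq_intervalIntegral_of_hasSum_one (hf : Function.Periodic f T) (hT : 0 < T)
    (hf_int : IntervalIntegrable f volume 0 T) {w : ℝ → ℝ} (hw : Measurable w)
    (hw_nonneg : 0 ≤ w) (hw_sum : ∀ x, HasSum (fun n : ℤ => w (x + n * T)) 1) :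
    ∫ x, w x • f x = ∫ x in 0..T, f x := by
  have hdomain : IsAddFundamentalDomain (AddSubgroup.zmultiples T) (Set.Ioc 0 T) := by
    simpa using isAddFundamentalDomain_Ioc hT 0
  let multiple : ℤ ≃ AddSubgroup.zmultiples T :=
    Equiv.ofBijective (fun n => ⟨n • T, n, rfl⟩)
      ⟨fun _ _ h => (zsmul_left_strictMono hT).injective (congrArg Subtype.val h),
        fun ⟨_, n, hn⟩ => ⟨n, Subtype.ext hn⟩⟩
  have hw_sum_vadd (x : ℝ) : HasSum (fun g : AddSubgroup.zmultiples T => w (g +ᵥ x)) 1 := by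
    rw [← multiple.hasSum_iff]
    convert hw_sum x using 3 with n
    simp [multiple, AddSubgroup.vadd_def, add_comm]
  rw [intervalIntegral.integral_of_le hT.le]
  exact integral_smul_eq_setIntegral_of_hasSum_vadd_one hdomain hw hw_nonneg hw_sum_vadd
    hf.map_vadd_zmultiples hf_int.1

theorem integral_sinc_sq_smul_of_periodic (hf : Function.Periodic f T) (hT : 0 < T)
    (hf_int : IntervalIntegrable f volume 0 T) :
    ∫ x, Real.sinc (π * (x / T)) ^ 2 • f x = ∫ x in 0..T, f x := by
  refine integral_smul_eq_intervalIntegral_of_hasSum_one hf hT hf_int (by fun_prop)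
    (fun _ => sq_nonneg _) fun x => ?_
  simpa only [add_div, mul_div_cancel_right₀ _ hT.ne'] using hasSum_sinc_sq_pi_mul_add_int (x / T)

theorem periodic_cos_sq_two_pi_nat_mul (k : ℕ) :
    Function.Periodic (fun x : ℝ => Real.cos (2 * π * k * x) ^ 2) (1 / 2) := by
  intro x
  have hshift : 2 * π * k * (x + 1 / 2) = 2 * π * k * x + k * π := by ring
  simp only [hshift, Real.cos_add_nat_mul_pi, mul_pow, pow_right_comm _ k 2, neg_one_sq, one_pow,
    one_mul]

theorem sinc2pi_eq_sinc (x : ℝ) : sinc2pi x = Real.sinc (2 * π * x) := by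
  simp [sinc2pi, Real.sinc, Real.pi_ne_zero]

theorem stmt_11_general (hf : Function.Periodic f (1 / 2))
    (hf_int : IntervalIntegrable f volume 0 (1 / 2)) :
    (2 : ℝ) • ∫ x, sinc2pi x ^ 2 • f x =
      ∫ x in (0 : ℝ)..1, (1 + Real.cos (2 * π * x)) • f x := by
  have hcos : Function.Antiperiodic (fun x => Real.cos (2 * π * x) • f x) (1 / 2) := fun x => by
    simp only [mul_add, hf x, mul_one_div, mul_div_cancel_left₀ π two_ne_zero, Real.cos_add_pi,
      neg_smul]
  have hf_int_all := hf.intervalIntegrable₀ one_half_pos.ne' hf_int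
  have hkernel (x : ℝ) : sinc2pi x = Real.sinc (π * (x / (1 / 2))) := by
    rw [sinc2pi_eq_sinc]
    ring_nf
  calc (2 : ℝ) • ∫ x, sinc2pi x ^ 2 • f x = (2 : ℝ) • ∫ x in 0..1 / 2, f x := by
        simp_rw [hkernel, integral_sinc_sq_smul_of_periodic hf one_half_pos hf_int]
    _ = ∫ x in (0 : ℝ)..1, f x := by
        simpa [two_smul, ← two_mul] using (hf.intervalIntegral_add_zsmul_eq 2 0 hf_int_all).symm
    _ = (∫ x in (0 : ℝ)..1, f x) + ∫ x in (0 : ℝ)..1, Real.cos (2 * π * x) • f x := by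
        simpa using intervalIntegral_eq_zero_of_antiperiodic hcos 0
    _ = ∫ x in (0 : ℝ)..1, (1 + Real.cos (2 * π * x)) • f x := by
        simp_rw [add_smul, one_smul]
        exact (intervalIntegral.integral_add (hf_int_all 0 1)
          ((hf_int_all 0 1).continuousOn_smul (by fun_prop))).symm

end Periodic

theorem stmt_11 (n : ℕ) (hn : 0 < n) (a : Fin n → ℕ) (ha : ∀ i, 0 < a i) :
    2 * ∫ x : ℝ, (sinc2pi x) ^ 2 * ∏ i, (Real.cos (2 * π * (a i : ℝ) * x)) ^ 2 =
      ∫ x in (0:ℝ)..1,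
        (1 + Real.cos (2 * π * x)) * ∏ i, (Real.cos (2 * π * (a i : ℝ) * x)) ^ 2 := by
  refine stmt_11_general (fun x => ?_) (Continuous.intervalIntegrable (by fun_prop) _ _)
  exact prod_congr rfl fun i _ => periodic_cos_sq_two_pi_nat_mul (a i) x
end

section
/- Let n be a positive integer and let a : Fin n → ℝ have a i > 0 for all i, with maximum A = max_i a_i. Then for every x with |x| ≤ 1/(4A), one has 0 ≤ ∏_{i=1}^{n} cos(2π a_i x) ≤ exp(−2π² x² ∑_{i=1}^{n} a_i²). -/
/-!
Since `s ≤ tan s` on `[0, π / 2)`, the derivative `(s cos s - sin s) exp (s² / 2)` of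
`cos s * exp (s² / 2)` is nonpositive there. Comparing with the value `1` at `0` gives
`cos s ≤ exp (-s² / 2)`; multiplying these bounds over the angles `2π aᵢ x`, on which the cosine is
nonnegative, turns the product of exponentials into the exponential of a sum.
-/

open Real Finset

section CosineBound

lemma hasDerivAt_cos_mul_exp_half_sq (s : ℝ) :
    HasDerivAt (fun s ↦ cos s * exp (s ^ 2 / 2)) ((s * cos s - sin s) * exp (s ^ 2 / 2)) s := by
  have hsq : HasDerivAt (fun s : ℝ ↦ s ^ 2 / 2) s s := by
    simpa using (hasDerivAt_pow 2 s).div_const 2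
  exact ((hasDerivAt_cos s).mul hsq.exp).congr_deriv (by ring)

lemma mul_cos_le_sin {s : ℝ} (h₀ : 0 ≤ s) (h₁ : s < π / 2) : s * cos s ≤ sin s := by
  have hcos : 0 < cos s := cos_pos_of_mem_Ioo ⟨by linarith [pi_pos], h₁⟩
  rw [← le_div_iff₀ hcos, ← tan_eq_sin_div_cos]
  exact le_tan h₀ h₁

lemma antitoneOn_cos_mul_exp_half_sq :
    AntitoneOn (fun s ↦ cos s * exp (s ^ 2 / 2)) (Set.Icc 0 (π / 2)) := by
  refine antitoneOn_of_hasDerivWithinAt_nonpos (convex_Icc _ _) (by fun_prop)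
    (fun s _ ↦ (hasDerivAt_cos_mul_exp_half_sq s).hasDerivWithinAt) fun s hs ↦ ?_
  rw [interior_Icc] at hs
  exact mul_nonpos_of_nonpos_of_nonneg (sub_nonpos.2 (mul_cos_le_sin hs.1.le hs.2)) (exp_nonneg _)

lemma cos_le_exp_neg_half_sq {t : ℝ} (ht : |t| ≤ 3 * π / 2) : cos t ≤ exp (-t ^ 2 / 2) := by
  rw [← cos_abs, ← sq_abs]
  rcases le_total |t| (π / 2) with hsmall | hlarge
  · have hle_one : cos |t| * exp (|t| ^ 2 / 2) ≤ 1 := by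
      simpa using antitoneOn_cos_mul_exp_half_sq (Set.left_mem_Icc.2 (by positivity))
        ⟨abs_nonneg t, hsmall⟩ (abs_nonneg t)
    rwa [neg_div, exp_neg, ← one_div, le_div_iff₀ (exp_pos _)]
  · have hcos : cos |t| ≤ 0 := cos_nonpos_of_pi_div_two_le_of_le hlarge (by linarith)
    exact hcos.trans (exp_nonneg _)

end CosineBound

section CosineProduct

variable {ι : Type*} {s : Finset ι} {θ : ι → ℝ}

lemma prod_cos_nonneg (hθ : ∀ i ∈ s, |θ i| ≤ π / 2) : 0 ≤ ∏ i ∈ s, cos (θ i) :=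
  prod_nonneg fun i hi ↦ cos_nonneg_of_mem_Icc (abs_le.1 (hθ i hi))

lemma prod_cos_le_exp_neg_half_sum_sq (hθ : ∀ i ∈ s, |θ i| ≤ π / 2) :
    ∏ i ∈ s, cos (θ i) ≤ exp (-(∑ i ∈ s, θ i ^ 2) / 2) :=
  calc ∏ i ∈ s, cos (θ i)
      ≤ ∏ i ∈ s, exp (-θ i ^ 2 / 2) :=
        prod_le_prod (fun i hi ↦ cos_nonneg_of_mem_Icc (abs_le.1 (hθ i hi)))
          fun i hi ↦ cos_le_exp_neg_half_sq (by linarith [hθ i hi, pi_pos])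
    _ = exp (-(∑ i ∈ s, θ i ^ 2) / 2) := by
        rw [← exp_sum, ← sum_div, sum_neg_distrib]

end CosineProduct

lemma abs_mul_le_one_div_of_abs_le {a A c x : ℝ} (hc : 0 ≤ c) (ha : |a| ≤ A)
    (hx : |x| ≤ 1 / (c * A)) : |a * x| ≤ 1 / c :=
  calc |a * x| = |a| * |x| := abs_mul a x
    _ ≤ A * (1 / (c * A)) := by gcongr; exact (abs_nonneg a).trans ha
    _ = 1 / c * (A * A⁻¹) := by rw [one_div, mul_inv]; ring
    _ ≤ 1 / c := mul_le_of_le_one_right (by positivity) mul_inv_le_one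

theorem stmt_12_general {ι : Type*} (s : Finset ι) (a : ι → ℝ) (x : ℝ)
    (hax : ∀ i ∈ s, |a i * x| ≤ 1 / 4) :
    0 ≤ ∏ i ∈ s, cos (2 * π * a i * x) ∧
      ∏ i ∈ s, cos (2 * π * a i * x) ≤ exp (-2 * π ^ 2 * x ^ 2 * ∑ i ∈ s, a i ^ 2) := by
  have hangle : ∀ i ∈ s, |2 * π * a i * x| ≤ π / 2 := fun i hi ↦
    calc |2 * π * a i * x| = 2 * π * |a i * x| := by
          rw [mul_assoc, abs_mul, abs_of_pos two_pi_pos]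
      _ ≤ 2 * π * (1 / 4) := by gcongr; exact hax i hi
      _ = π / 2 := by ring
  have hexponent : -(∑ i ∈ s, (2 * π * a i * x) ^ 2) / 2 =
      -2 * π ^ 2 * x ^ 2 * ∑ i ∈ s, a i ^ 2 := by
    simp only [mul_pow, ← mul_sum, ← sum_mul]
    ring
  exact ⟨prod_cos_nonneg hangle, hexponent ▸ prod_cos_le_exp_neg_half_sum_sq hangle⟩

theorem stmt_12 (n : ℕ) (hn : 0 < n) (a : Fin n → ℝ) (ha : ∀ i, 0 < a i)
    (A : ℝ) (hA : IsGreatest (Set.range a) A) (x : ℝ) (hx : |x| ≤ 1 / (4 * A)) :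
    0 ≤ ∏ i, Real.cos (2 * π * a i * x) ∧
      ∏ i, Real.cos (2 * π * a i * x) ≤
        Real.exp (-2 * π ^ 2 * x ^ 2 * ∑ i, (a i) ^ 2) :=
  stmt_12_general univ a x fun i _ ↦ abs_mul_le_one_div_of_abs_le zero_le_four
    ((abs_of_pos (ha i)).trans_le (hA.2 ⟨i, rfl⟩)) hx
end

section
/- Let n be a positive integer, M > 0, and let a : Fin n → ℝ satisfy 0 < a_i ≤ M for all i. Then ∫_{|x| ≤ 1/(4M)} ∏_{i=1}^{n} cos(2π a_i x)² dx ≥ (1/(2M)) · binom(2n, n)/4^n. -/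
open Real MeasureTheory Finset

/-!
On the interval `|x| ≤ 1 / (4 * M)` every angle satisfies `|2 π aᵢ x| ≤ |2 π M x| ≤ π / 2`, so each
factor is at least `cos (2 π M x) ^ 2`. The integral is therefore smallest when all the `aᵢ` equal
`M`, and in that case the substitution `t = 2 π M x` turns it into Wallis' integral of
`cos t ^ (2 * n)` over `[-π / 2, π / 2]`.
-/

theorem cos_le_cos_of_abs_le_abs {x y : ℝ} (hy : |y| ≤ π) (hxy : |x| ≤ |y|) : cos y ≤ cos x := by
  rw [← cos_abs x, ← cos_abs y]
  exact cos_le_cos_of_nonneg_of_le_pi (abs_nonneg x) hy hxy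

theorem cos_pow_card_le_prod_cos {ι : Type*} {s : Finset ι} {θ : ι → ℝ} {φ : ℝ}
    (hφ : |φ| ≤ π / 2) (hθ : ∀ i ∈ s, |θ i| ≤ |φ|) : cos φ ^ #s ≤ ∏ i ∈ s, cos (θ i) := by
  have hcos : 0 ≤ cos φ := cos_nonneg_of_mem_Icc (abs_le.mp hφ)
  rw [← prod_const]
  exact prod_le_prod (fun _ _ => hcos) fun i hi =>
    cos_le_cos_of_abs_le_abs (hφ.trans (half_le_self pi_pos.le)) (hθ i hi)

theorem cos_pow_two_mul_card_le_prod_cos_sq {ι : Type*} {s : Finset ι} {θ : ι → ℝ} {φ : ℝ}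
    (hφ : |φ| ≤ π / 2) (hθ : ∀ i ∈ s, |θ i| ≤ |φ|) :
    cos φ ^ (2 * #s) ≤ ∏ i ∈ s, cos (θ i) ^ 2 := by
  have hcos : 0 ≤ cos φ := cos_nonneg_of_mem_Icc (abs_le.mp hφ)
  rw [mul_comm, pow_mul, prod_pow]
  exact pow_le_pow_left₀ (pow_nonneg hcos _) (cos_pow_card_le_prod_cos hφ hθ) 2

theorem prod_range_odd_div_even_eq_centralBinom_div {K : Type*} [Field K] [CharZero K] (n : ℕ) :
    ∏ i ∈ range n, (2 * (i : K) + 1) / (2 * i + 2) = n.centralBinom / 4 ^ n := by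
  induction n with
  | zero => simp
  | succ n ih =>
    have hrec : ((n : K) + 1) * (n + 1).centralBinom = 2 * (2 * n + 1) * n.centralBinom :=
      mod_cast Nat.succ_mul_centralBinom_succ n
    have hn : (n : K) + 1 ≠ 0 := n.cast_add_one_ne_zero
    rw [prod_range_succ, ih, show 2 * (n : K) + 2 = 2 * (n + 1) by ring]
    field_simp
    linear_combination -2 * 4 ^ n * hrec

theorem integral_cos_pow_eq_integral_sin_pow (n : ℕ) :
    ∫ x in (-(π / 2))..(π / 2), cos x ^ n = ∫ x in (0 : ℝ)..π, sin x ^ n := by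
  simp only [← sin_add_pi_div_two]
  rw [intervalIntegral.integral_comp_add_right (fun x => sin x ^ n), neg_add_cancel, add_halves]

theorem integral_cos_pow_two_mul (n : ℕ) :
    ∫ x in (-(π / 2))..(π / 2), cos x ^ (2 * n) = π * (n.centralBinom / 4 ^ n) := by
  rw [integral_cos_pow_eq_integral_sin_pow, integral_sin_pow_even,
    prod_range_odd_div_even_eq_centralBinom_div]

theorem two_pi_mul_mul_one_div_four_mul {M : ℝ} (hM : M ≠ 0) :
    2 * π * M * (1 / (4 * M)) = π / 2 := by
  field_simp
  norm_num

theorem integral_cos_two_pi_mul_pow_two_mul (n : ℕ) {M : ℝ} (hM : M ≠ 0) :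
    ∫ x in (-(1 / (4 * M)))..(1 / (4 * M)), cos (2 * π * M * x) ^ (2 * n) =
      1 / (2 * M) * n.centralBinom / 4 ^ n := by
  have hscale : 2 * π * M ≠ 0 := mul_ne_zero two_pi_pos.ne' hM
  rw [intervalIntegral.integral_comp_mul_left (fun t => cos t ^ (2 * n)) hscale, mul_neg,
    two_pi_mul_mul_one_div_four_mul hM, integral_cos_pow_two_mul, smul_eq_mul]
  field_simp

theorem setIntegral_abs_le_eq_intervalIntegral {E : Type*} [NormedAddCommGroup E]
    [NormedSpace ℝ E] (f : ℝ → E) {r : ℝ} (hr : 0 ≤ r) :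
    ∫ x in {x : ℝ | |x| ≤ r}, f x = ∫ x in (-r)..r, f x := by
  have hset : {x : ℝ | |x| ≤ r} = Set.Icc (-r) r := by
    ext x
    simp only [Set.mem_ofPred_eq, Set.mem_Icc, abs_le]
  rw [hset, integral_Icc_eq_integral_Ioc, ← intervalIntegral.integral_of_le (neg_le_self hr)]

theorem stmt_13_general {ι : Type*} (s : Finset ι) {M : ℝ} (hM : 0 < M) {a : ι → ℝ}
    (ha : ∀ i ∈ s, |a i| ≤ M) :
    1 / (2 * M) * (#s).centralBinom / 4 ^ #s ≤
      ∫ x in {x : ℝ | |x| ≤ 1 / (4 * M)}, ∏ i ∈ s, cos (2 * π * a i * x) ^ 2 := by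
  have hr : 0 ≤ 1 / (4 * M) := by positivity
  rw [setIntegral_abs_le_eq_intervalIntegral _ hr, ← integral_cos_two_pi_mul_pow_two_mul _ hM.ne']
  refine intervalIntegral.integral_mono_on (neg_le_self hr)
    (Continuous.intervalIntegrable (by fun_prop) _ _)
    (Continuous.intervalIntegrable (by fun_prop) _ _) fun x hx => ?_
  apply cos_pow_two_mul_card_le_prod_cos_sq
  · calc |2 * π * M * x| = 2 * π * M * |x| := by rw [abs_mul, abs_of_pos (by positivity)]
      _ ≤ 2 * π * M * (1 / (4 * M)) := by gcongr; exact abs_le.mpr hx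
      _ = π / 2 := two_pi_mul_mul_one_div_four_mul hM.ne'
  · intro i hi
    simp only [abs_mul, abs_of_pos hM]
    gcongr
    exact ha i hi

theorem stmt_13 (n : ℕ) (hn : 0 < n) (M : ℝ) (hM : 0 < M) (a : Fin n → ℝ)
    (ha : ∀ i, 0 < a i) (haM : ∀ i, a i ≤ M) :
    (1 / (2 * M)) * (Nat.choose (2 * n) n : ℝ) / 4 ^ n ≤
      ∫ x in {x : ℝ | |x| ≤ 1 / (4 * M)},
        ∏ i, (Real.cos (2 * π * a i * x)) ^ 2 := by
  have habs (i : Fin n) : |a i| ≤ M := (abs_of_pos (ha i)).trans_le (haM i)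
  simpa only [card_univ, Fintype.card_fin, Nat.centralBinom] using
    stmt_13_general univ hM fun i _ => habs i
end

section
/- For all c > 0 and δ > 0 there exists N such that for all n ≥ N and all families a : Fin n → ℝ with 0 < a_i for every i, satisfying ∑_{i=1}^{n} a_i² ≥ 4^n/3 and A² ≤ c · n^{−1/2} · ∑_{i=1}^{n} a_i² where A = max_i a_i, one has ∫_{|x| ≤ 1/(4A)} ∏_{i=1}^{n} cos(2π a_i x)² dx ≥ (1 − δ)/(2√π) · (∑_{i=1}^{n} a_i²)^{−1/2}. -/
open Real MeasureTheory Finset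

/-!
Where `b * t ^ 2 ≤ b - 1` one has
`cos t ^ 2 ≥ 1 - t ^ 2 ≥ 1 / (1 + b * t ^ 2) ≥ exp (-b * t ^ 2)`.
Multiplying over the frequencies `ω i`, the product of the `cos (ω i * x) ^ 2` dominates the
Gaussian `exp (-b * W * x ^ 2)`, `W = ∑ i, ω i ^ 2`, on the window `|x| ≤ R / √W`,
provided no single `ω i ^ 2` carries more than a small proportion of `W`. The substitution
`y = √W * x` turns the Gaussian integral into `(√W)⁻¹ * ∫ y in -R..R, exp (-b * y ^ 2)`, which is
close to `√π / √W` once `b` is close to `1` and `R` is large.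
-/

lemma intervalIntegral_le_setIntegral_abs_le {f : ℝ → ℝ} {r T : ℝ} (hf : LocallyIntegrable f)
    (hf_nonneg : 0 ≤ f) (hr : 0 ≤ r) (hrT : r ≤ T) :
    ∫ x in (-r)..r, f x ≤ ∫ x in {x : ℝ | |x| ≤ T}, f x := by
  have set_eq : {x : ℝ | |x| ≤ T} = Set.Icc (-T) T := by
    ext x
    simp only [Set.mem_ofPred_eq, Set.mem_Icc, abs_le]
  rw [set_eq, intervalIntegral.integral_of_le (neg_le_self hr)]
  exact setIntegral_mono_set (hf.integrableOn_isCompact isCompact_Icc) (.of_forall hf_nonneg)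
    (Set.Ioc_subset_Icc_self.trans (Set.Icc_subset_Icc (neg_le_neg hrT) hrT)).eventuallyLE

lemma eventually_mul_natCast_rpow_neg_le (c : ℝ) {s η : ℝ} (hs : 0 < s) (hη : 0 < η) :
    ∀ᶠ n : ℕ in Filter.atTop, c * (n : ℝ) ^ (-s) ≤ η := by
  have lim := ((tendsto_rpow_neg_atTop hs).comp tendsto_natCast_atTop_atTop).const_mul c
  rw [mul_zero] at lim
  exact lim.eventually_le_const hη

section

variable {ι : Type*} {b R t : ℝ}

lemma exp_neg_mul_sq_le_cos_sq (hb : 0 < b) (ht : b * t ^ 2 ≤ b - 1) :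
    exp (-b * t ^ 2) ≤ cos t ^ 2 := by
  have one_le : 1 ≤ (1 - t ^ 2) * (1 + b * t ^ 2) := by
    nlinarith [mul_nonneg (sq_nonneg t) (sub_nonneg.2 ht)]
  calc exp (-b * t ^ 2) = (exp (b * t ^ 2))⁻¹ := by rw [neg_mul, exp_neg]
    _ ≤ (1 + b * t ^ 2)⁻¹ := by
        gcongr
        linarith [add_one_le_exp (b * t ^ 2)]
    _ ≤ 1 - t ^ 2 := (inv_le_iff_one_le_mul₀ (by positivity)).2 one_le
    _ ≤ cos t ^ 2 := by
        rw [cos_sq']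
        exact sub_le_sub_left (sq_le_sq.2 abs_sin_le_abs) 1

lemma exp_neg_mul_sum_sq_le_prod_cos_sq (s : Finset ι) (θ : ι → ℝ) (hb : 0 < b)
    (hθ : ∀ i ∈ s, b * θ i ^ 2 ≤ b - 1) :
    exp (-b * ∑ i ∈ s, θ i ^ 2) ≤ ∏ i ∈ s, cos (θ i) ^ 2 := by
  rw [mul_sum, exp_sum]
  exact prod_le_prod (fun _ _ => (exp_pos _).le) fun i hi => exp_neg_mul_sq_le_cos_sq hb (hθ i hi)

lemma exists_lt_intervalIntegral_exp_neg_mul_sq {C : ℝ} (hb : 0 < b) (hC : C < √(π / b)) :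
    ∃ R > 0, C < ∫ y in (-R)..R, exp (-b * y ^ 2) := by
  have lim := intervalIntegral_tendsto_integral (integrable_exp_neg_mul_sq hb)
    Filter.tendsto_neg_atTop_atBot Filter.tendsto_id
  rw [integral_gaussian] at lim
  exact ((Filter.eventually_gt_atTop 0).and (lim.eventually_const_lt hC)).exists

lemma one_sub_mul_sqrt_pi_lt_sqrt_pi_div {δ : ℝ} (hδ : 0 < δ) :
    (1 - δ) * √π < √(π / (1 + δ) ^ 2) := by
  rw [sqrt_div pi_pos.le, sqrt_sq (by positivity), lt_div_iff₀ (by positivity)]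
  nlinarith [mul_pos (sq_pos_of_pos hδ) (sqrt_pos.2 pi_pos)]

lemma inv_sqrt_mul_integral_gaussian_le_integral_prod_cos_sq [Fintype ι] (ω : ι → ℝ)
    (hb : 0 < b) (hR : 0 ≤ R) (hW : 0 < ∑ i, ω i ^ 2)
    (hω : ∀ i, b * (ω i ^ 2 * R ^ 2) ≤ (b - 1) * ∑ j, ω j ^ 2) :
    (√(∑ i, ω i ^ 2))⁻¹ * ∫ y in (-R)..R, exp (-b * y ^ 2) ≤
      ∫ x in (-(R / √(∑ i, ω i ^ 2)))..(R / √(∑ i, ω i ^ 2)), ∏ i, cos (ω i * x) ^ 2 := by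
  set W := ∑ i, ω i ^ 2
  have dominated : ∀ x ∈ Set.Icc (-(R / √W)) (R / √W),
      exp (-b * (√W * x) ^ 2) ≤ ∏ i, cos (ω i * x) ^ 2 := by
    intro x hx
    have sq_le : x ^ 2 ≤ R ^ 2 / W := by
      simpa only [div_pow, sq_sqrt hW.le] using sq_le_sq' hx.1 hx.2
    have exponent : (√W * x) ^ 2 = ∑ i, (ω i * x) ^ 2 := by
      simp only [mul_pow, sq_sqrt hW.le, W, sum_mul]
    rw [exponent]
    refine exp_neg_mul_sum_sq_le_prod_cos_sq _ _ hb fun i _ => ?_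
    calc b * (ω i * x) ^ 2 = b * ω i ^ 2 * x ^ 2 := by ring
      _ ≤ b * ω i ^ 2 * (R ^ 2 / W) := by gcongr
      _ = b * (ω i ^ 2 * R ^ 2) / W := by ring
      _ ≤ b - 1 := (div_le_iff₀ hW).2 (hω i)
  calc (√W)⁻¹ * ∫ y in (-R)..R, exp (-b * y ^ 2)
      = ∫ x in (-(R / √W))..(R / √W), exp (-b * (√W * x) ^ 2) := by
        rw [intervalIntegral.integral_comp_mul_left (fun y => exp (-b * y ^ 2))
          (sqrt_pos.2 hW).ne', mul_neg, mul_div_cancel₀ R (sqrt_pos.2 hW).ne', smul_eq_mul]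
    _ ≤ ∫ x in (-(R / √W))..(R / √W), ∏ i, cos (ω i * x) ^ 2 :=
        intervalIntegral.integral_mono_on (neg_le_self (by positivity))
          (Continuous.intervalIntegrable (by fun_prop) _ _)
          (Continuous.intervalIntegrable (by fun_prop) _ _) dominated

lemma inv_sqrt_mul_integral_gaussian_le_setIntegral_prod_cos_sq [Fintype ι] (ω : ι → ℝ) {M : ℝ}
    (hb : 0 < b) (hR : 0 ≤ R) (hM : 0 < M) (hW : 0 < ∑ i, ω i ^ 2) (hω : ∀ i, |ω i| ≤ M)
    (hMW : b * (M ^ 2 * R ^ 2) ≤ (b - 1) * ∑ i, ω i ^ 2) :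
    (√(∑ i, ω i ^ 2))⁻¹ * ∫ y in (-R)..R, exp (-b * y ^ 2) ≤
      ∫ x in {x : ℝ | |x| ≤ π / (2 * M)}, ∏ i, cos (ω i * x) ^ 2 := by
  set W := ∑ i, ω i ^ 2
  have mul_le_sqrt : M * R ≤ √W := le_sqrt_of_sq_le (le_of_mul_le_mul_left (by linarith) hb)
  have window : R / √W ≤ π / (2 * M) := by
    calc R / √W ≤ 1 / M := by
          rw [div_le_div_iff₀ (sqrt_pos.2 hW) hM]
          linarith
      _ ≤ π / 2 / M := by
          gcongr
          exact one_le_pi_div_two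
      _ = π / (2 * M) := div_div _ _ _
  calc (√W)⁻¹ * ∫ y in (-R)..R, exp (-b * y ^ 2)
      ≤ ∫ x in (-(R / √W))..(R / √W), ∏ i, cos (ω i * x) ^ 2 := by
        refine inv_sqrt_mul_integral_gaussian_le_integral_prod_cos_sq ω hb hR hW
          fun i => le_trans ?_ hMW
        gcongr b * (?_ * R ^ 2)
        exact sq_le_sq.2 ((hω i).trans (le_abs_self M))
    _ ≤ ∫ x in {x : ℝ | |x| ≤ π / (2 * M)}, ∏ i, cos (ω i * x) ^ 2 :=
        intervalIntegral_le_setIntegral_abs_le (Continuous.locallyIntegrable (by fun_prop))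
          (fun x => prod_nonneg fun i _ => sq_nonneg (cos (ω i * x))) (by positivity) window

end

lemma exists_one_sub_mul_sqrt_pi_le_setIntegral_prod_cos_sq {δ : ℝ} (hδ : 0 < δ) :
    ∃ η > 0, ∀ {ι : Type*} [Fintype ι] (ω : ι → ℝ) {M : ℝ}, 0 < M → (∀ i, |ω i| ≤ M) →
      M ^ 2 ≤ η * ∑ i, ω i ^ 2 →
      (1 - δ) * √π * (√(∑ i, ω i ^ 2))⁻¹ ≤
        ∫ x in {x : ℝ | |x| ≤ π / (2 * M)}, ∏ i, cos (ω i * x) ^ 2 := by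
  set b := (1 + δ) ^ 2
  have one_lt_b : 1 < b := one_lt_pow₀ (by linarith) two_ne_zero
  have b_pos : 0 < b := by positivity
  obtain ⟨R, R_pos, hR⟩ := exists_lt_intervalIntegral_exp_neg_mul_sq b_pos
    (one_sub_mul_sqrt_pi_lt_sqrt_pi_div hδ)
  refine ⟨(b - 1) / (b * R ^ 2), div_pos (sub_pos.2 one_lt_b) (by positivity),
    fun {ι} _ ω M M_pos hω hM => ?_⟩
  set W := ∑ i, ω i ^ 2
  have spread : b * (M ^ 2 * R ^ 2) ≤ (b - 1) * W := by
    rw [div_mul_eq_mul_div, le_div_iff₀ (by positivity)] at hM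
    linarith
  have W_pos : 0 < W := pos_of_mul_pos_right
    (lt_of_lt_of_le (by positivity) spread) (sub_pos.2 one_lt_b).le
  calc (1 - δ) * √π * (√W)⁻¹
      ≤ (√W)⁻¹ * ∫ y in (-R)..R, exp (-b * y ^ 2) := by
        rw [mul_comm]
        gcongr
    _ ≤ ∫ x in {x : ℝ | |x| ≤ π / (2 * M)}, ∏ i, cos (ω i * x) ^ 2 :=
        inv_sqrt_mul_integral_gaussian_le_setIntegral_prod_cos_sq ω b_pos R_pos.le M_pos W_pos hω
          spread

theorem stmt_14_general {δ : ℝ} (hδ : 0 < δ) :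
    ∃ η > 0, ∀ {ι : Type*} [Fintype ι] (a : ι → ℝ) {A : ℝ}, 0 < A → (∀ i, |a i| ≤ A) →
      A ^ 2 ≤ η * ∑ i, (a i) ^ 2 →
      (1 - δ) / (2 * √π) * (∑ i, (a i) ^ 2) ^ (-(1 / 2) : ℝ) ≤
        ∫ x in {x : ℝ | |x| ≤ 1 / (4 * A)}, ∏ i, cos (2 * π * a i * x) ^ 2 := by
  obtain ⟨η, η_pos, hη⟩ := exists_one_sub_mul_sqrt_pi_le_setIntegral_prod_cos_sq hδ
  refine ⟨η, η_pos, fun {ι} _ a A A_pos ha hA => ?_⟩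
  have sum_scaled : ∑ i, (2 * π * a i) ^ 2 = (2 * π) ^ 2 * ∑ i, a i ^ 2 := by
    simp only [mul_pow, mul_sum]
  have window_eq : π / (2 * (2 * π * A)) = 1 / (4 * A) := by
    field_simp
    norm_num
  have constant_eq : (1 - δ) * √π * (√((2 * π) ^ 2 * ∑ i, a i ^ 2))⁻¹ =
      (1 - δ) / (2 * √π) * (∑ i, a i ^ 2) ^ (-(1 / 2) : ℝ) := by
    rw [sqrt_mul (sq_nonneg _), sqrt_sq two_pi_pos.le, rpow_neg (by positivity), ← sqrt_eq_rpow,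
      mul_inv, ← mul_assoc]
    congr 1
    field_simp
    rw [sq_sqrt pi_pos.le]
  rw [← constant_eq, ← window_eq, ← sum_scaled]
  refine hη (fun i => 2 * π * a i) (by positivity) (fun i => ?_) ?_
  · rw [abs_mul, abs_of_pos two_pi_pos]
    exact mul_le_mul_of_nonneg_left (ha i) two_pi_pos.le
  · rw [sum_scaled, mul_pow, mul_left_comm]
    gcongr

theorem stmt_14 (c δ : ℝ) (hc : 0 < c) (hδ : 0 < δ) :
    ∃ N : ℕ, ∀ n : ℕ, N ≤ n → ∀ a : Fin n → ℝ, (∀ i, 0 < a i) →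
      (4 : ℝ) ^ n / 3 ≤ ∑ i, (a i) ^ 2 →
      ∀ A : ℝ, IsGreatest (Set.range a) A →
      A ^ 2 ≤ c * (n : ℝ) ^ (-(1/2) : ℝ) * ∑ i, (a i) ^ 2 →
      (1 - δ) / (2 * Real.sqrt π) * (∑ i, (a i) ^ 2) ^ (-(1/2) : ℝ) ≤
        ∫ x in {x : ℝ | |x| ≤ 1 / (4 * A)},
          ∏ i, (Real.cos (2 * π * a i * x)) ^ 2 := by
  obtain ⟨η, η_pos, hη⟩ := stmt_14_general hδ
  obtain ⟨N, hN⟩ :=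
    Filter.eventually_atTop.1 (eventually_mul_natCast_rpow_neg_le c one_half_pos η_pos)
  refine ⟨N, fun n hn a ha _ A hA hAS => hη a ?_ (fun i => ?_) (hAS.trans ?_)⟩
  · obtain ⟨i, rfl⟩ := hA.1
    exact ha i
  · exact (abs_of_pos (ha i)).trans_le (hA.2 ⟨i, rfl⟩)
  · gcongr
    exact hN n hn
end

section
/- Let N be a positive integer and let x_1,…,x_N be real numbers. Define f(x) = (1/N) ∑_{i=1}^{N} (1/2) · 𝟙_{[x_i − 1, x_i + 1]}(x). Then ∫_ℝ f(x)² dx ≥ 1/(2N), with equality if and only if |x_i − x_j| ≥ 2 for all i ≠ j. -/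
open Real MeasureTheory Finset

/-!
Expanding the square of `∑ i, 1_{A i}` and integrating gives the sum of all `μ (A i ∩ A j)`. The
diagonal terms alone give the lower bound, and the nonnegative off-diagonal terms all vanish exactly
when the sets are pairwise almost everywhere disjoint. Two closed balls of radius `r` meet in a null
set iff the concentric open balls are disjoint, that is, iff the centers are at distance at
least `2 * r`.
-/

section SumIndicator

variable {α ι : Type*} [MeasurableSpace α] {μ : Measure α} {A : ι → Set α}

lemma integral_sum_indicator_sq (s : Finset ι) (hA : ∀ i ∈ s, MeasurableSet (A i))
    (hfin : ∀ i ∈ s, μ (A i) ≠ ⊤) :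
    ∫ y, (∑ i ∈ s, (A i).indicator (fun _ => (1 : ℝ)) y) ^ 2 ∂μ =
      ∑ p ∈ s ×ˢ s, μ.real (A p.1 ∩ A p.2) := by
  have h_meas : ∀ p ∈ s ×ˢ s, MeasurableSet (A p.1 ∩ A p.2) := fun p hp =>
    (hA _ (mem_product.mp hp).1).inter (hA _ (mem_product.mp hp).2)
  have h_fin : ∀ p ∈ s ×ˢ s, μ (A p.1 ∩ A p.2) ≠ ⊤ := fun p hp =>
    measure_ne_top_of_subset Set.inter_subset_left (hfin _ (mem_product.mp hp).1)
  have h_expand (y : α) : (∑ i ∈ s, (A i).indicator (fun _ => (1 : ℝ)) y) ^ 2 =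
      ∑ p ∈ s ×ˢ s, (A p.1 ∩ A p.2).indicator 1 y := by
    rw [sq, sum_mul_sum, ← sum_product']
    exact sum_congr rfl fun p _ => (congrFun Set.inter_indicator_one y).symm
  simp_rw [h_expand]
  rw [integral_finsetSum _ fun p hp =>
    (integrable_indicator_iff (h_meas p hp)).mpr (integrableOn_const (h_fin p hp))]
  exact sum_congr rfl fun p hp => integral_indicator_one (h_meas p hp)

lemma integral_sum_indicator_sq_eq_add_offDiag (s : Finset ι)
    (hA : ∀ i ∈ s, MeasurableSet (A i)) (hfin : ∀ i ∈ s, μ (A i) ≠ ⊤) :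
    ∫ y, (∑ i ∈ s, (A i).indicator (fun _ => (1 : ℝ)) y) ^ 2 ∂μ =
      ∑ i ∈ s, μ.real (A i) + ∑ p ∈ s.offDiag, μ.real (A p.1 ∩ A p.2) := by
  classical
  rw [integral_sum_indicator_sq s hA hfin, ← diag_union_offDiag,
    sum_union (disjoint_diag_offDiag s), sum_diag]
  simp only [Set.inter_self]

lemma sum_measureReal_le_integral_sum_indicator_sq (s : Finset ι)
    (hA : ∀ i ∈ s, MeasurableSet (A i)) (hfin : ∀ i ∈ s, μ (A i) ≠ ⊤) :
    ∑ i ∈ s, μ.real (A i) ≤ ∫ y, (∑ i ∈ s, (A i).indicator (fun _ => (1 : ℝ)) y) ^ 2 ∂μ := by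
  rw [integral_sum_indicator_sq_eq_add_offDiag s hA hfin]
  exact le_add_of_nonneg_right (sum_nonneg fun _ _ => measureReal_nonneg)

lemma integral_sum_indicator_sq_eq_sum_measureReal_iff (s : Finset ι)
    (hA : ∀ i ∈ s, MeasurableSet (A i)) (hfin : ∀ i ∈ s, μ (A i) ≠ ⊤) :
    ∫ y, (∑ i ∈ s, (A i).indicator (fun _ => (1 : ℝ)) y) ^ 2 ∂μ = ∑ i ∈ s, μ.real (A i) ↔
      ∀ i ∈ s, ∀ j ∈ s, i ≠ j → AEDisjoint μ (A i) (A j) := by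
  have h_null {i : ι} (hi : i ∈ s) (j : ι) :
      μ.real (A i ∩ A j) = 0 ↔ AEDisjoint μ (A i) (A j) :=
    measureReal_eq_zero_iff (measure_ne_top_of_subset Set.inter_subset_left (hfin i hi))
  rw [integral_sum_indicator_sq_eq_add_offDiag s hA hfin, add_eq_left,
    sum_eq_zero_iff_of_nonneg fun _ _ => measureReal_nonneg]
  simp only [Prod.forall, mem_offDiag, and_imp]
  exact ⟨fun h i hi j hj hij => (h_null hi j).mp (h i j hi hj hij),
    fun h i j hi hj hij => (h_null hi j).mpr (h i hi j hj hij)⟩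

end SumIndicator

lemma aedisjoint_iff_disjoint_interior {X : Type*} [TopologicalSpace X] [MeasurableSpace X]
    {μ : Measure X} [μ.IsOpenPosMeasure] {s t : Set X} (hs : μ (frontier s) = 0)
    (ht : μ (frontier t) = 0) :
    AEDisjoint μ s t ↔ Disjoint (interior s) (interior t) := by
  have hs' : interior s =ᵐ[μ] s := interior_ae_eq_of_null_frontier hs
  have ht' : interior t =ᵐ[μ] t := interior_ae_eq_of_null_frontier ht
  calc AEDisjoint μ s t
      ↔ AEDisjoint μ (interior s) (interior t) :=
        ⟨fun h => h.congr hs' ht', fun h => h.congr hs'.symm ht'.symm⟩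
    _ ↔ interior s ∩ interior t = ∅ :=
        (isOpen_interior.inter isOpen_interior).measure_eq_zero_iff μ
    _ ↔ Disjoint (interior s) (interior t) := Set.disjoint_iff_inter_eq_empty.symm

section Ball

variable {E : Type*} [NormedAddCommGroup E] [NormedSpace ℝ E] [FiniteDimensional ℝ E]
  [MeasurableSpace E] [BorelSpace E] (μ : Measure E) [μ.IsAddHaarMeasure]

lemma aedisjoint_closedBall_iff (a b : E) {r s : ℝ} (hr : 0 < r) (hs : 0 < s) :
    AEDisjoint μ (Metric.closedBall a r) (Metric.closedBall b s) ↔ r + s ≤ dist a b := by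
  rw [aedisjoint_iff_disjoint_interior ((convex_closedBall a r).addHaar_frontier μ)
    ((convex_closedBall b s).addHaar_frontier μ), interior_closedBall a hr.ne',
    interior_closedBall b hs.ne', disjoint_ball_ball_iff hr hs]

theorem stmt_16_general {ι : Type*} [Fintype ι] [Nonempty ι] (x : ι → E) {r : ℝ} (hr : 0 < r) :
    1 / (μ.real (Metric.closedBall 0 r) * Fintype.card ι) ≤
      ∫ y, ((1 / Fintype.card ι : ℝ) * ∑ i, 1 / μ.real (Metric.closedBall 0 r) *
        (Metric.closedBall (x i) r).indicator (fun _ => (1 : ℝ)) y) ^ 2 ∂μ ∧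
    (∫ y, ((1 / Fintype.card ι : ℝ) * ∑ i, 1 / μ.real (Metric.closedBall 0 r) *
        (Metric.closedBall (x i) r).indicator (fun _ => (1 : ℝ)) y) ^ 2 ∂μ =
        1 / (μ.real (Metric.closedBall 0 r) * Fintype.card ι) ↔
      ∀ i j, i ≠ j → 2 * r ≤ dist (x i) (x j)) := by
  set m := μ.real (Metric.closedBall 0 r)
  set n := (Fintype.card ι : ℝ)
  have hm : 0 < m := ENNReal.toReal_pos (Metric.measure_closedBall_pos μ 0 hr).ne'
    measure_closedBall_lt_top.ne
  have hn : 0 < n := Nat.cast_pos.mpr Fintype.card_pos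
  have h_meas : ∀ i ∈ univ, MeasurableSet (Metric.closedBall (x i) r) :=
    fun _ _ => measurableSet_closedBall
  have h_fin : ∀ i ∈ univ, μ (Metric.closedBall (x i) r) ≠ ⊤ :=
    fun _ _ => measure_closedBall_lt_top.ne
  have h_sum : ∑ i, μ.real (Metric.closedBall (x i) r) = n * m := by
    simp only [μ.addHaar_real_closedBall_center, sum_const, card_univ, nsmul_eq_mul, n, m]
  have h_scale : 1 / (m * n) = (1 / (n * m)) ^ 2 * (n * m) := by field_simp
  simp only [← mul_sum, ← mul_assoc, one_div_mul_one_div, mul_pow, integral_const_mul]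
  rw [h_scale, ← h_sum]
  constructor
  · gcongr
    exact sum_measureReal_le_integral_sum_indicator_sq univ h_meas h_fin
  · rw [mul_right_inj' (by rw [h_sum]; positivity),
      integral_sum_indicator_sq_eq_sum_measureReal_iff univ h_meas h_fin]
    simp only [mem_univ, true_imp_iff, aedisjoint_closedBall_iff μ _ _ hr hr, two_mul]

end Ball

theorem stmt_16 (N : ℕ) (hN : 0 < N) (x : Fin N → ℝ) :
    (1 / (2 * N) : ℝ) ≤
      ∫ y : ℝ, ((1 / N : ℝ) * ∑ i, (1 / 2 : ℝ) *
        Set.indicator (Set.Icc (x i - 1) (x i + 1)) (fun _ => (1 : ℝ)) y) ^ 2 ∧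
    ((∫ y : ℝ, ((1 / N : ℝ) * ∑ i, (1 / 2 : ℝ) *
        Set.indicator (Set.Icc (x i - 1) (x i + 1)) (fun _ => (1 : ℝ)) y) ^ 2)
        = 1 / (2 * N) ↔ ∀ i j : Fin N, i ≠ j → 2 ≤ |x i - x j|) := by
  have : NeZero N := ⟨hN.ne'⟩
  simpa [closedBall_eq_Icc, dist_eq, one_add_one_eq_two] using stmt_16_general volume x one_pos
end

section
/- For all c > 0 and δ > 0 there exists N such that for all n ≥ N and all families a : Fin n → ℝ of positive reals whose subset sums are 1-separated and whose maximum A = max_i a_i satisfies A² ≤ c · n^{−1/2} · ∑_{i=1}^{n} a_i², one has ∫_ℝ (F(x) − γ(x))² dx ≤ (1 + δ) · 2^{−n}, where F = h*μ is the smoothed random-walk density and γ is the comparison Gaussian density. -/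
open Real MeasureTheory Finset

/-- The subset sums of the family `a` are 1-separated. -/
def SepSums {n : ℕ} (a : Fin n → ℝ) : Prop :=
  ∀ S T : Finset (Fin n), S ≠ T → 1 ≤ |∑ i ∈ S, a i - ∑ i ∈ T, a i|

/-- The signed sum `S_ε = ∑ i, ε_i a_i` for a sign vector `ε` (encoded by booleans,
`true ↦ +1`, `false ↦ -1`). -/
def signedSum {n : ℕ} (a : Fin n → ℝ) (ε : Fin n → Bool) : ℝ :=
  ∑ i, if ε i then a i else -a i

/-- The smoothed random-walk density `F = h * μ`:
`F(x) = 2^{-n} ∑_{ε ∈ {−1,1}^n} (1/2)·𝟙_{[S_ε − 1, S_ε + 1]}(x)`. -/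
noncomputable def smoothedDensity {n : ℕ} (a : Fin n → ℝ) (x : ℝ) : ℝ :=
  (1 / 2 ^ n) * ∑ ε : Fin n → Bool,
    (1 / 2) * Set.indicator (Set.Icc (signedSum a ε - 1) (signedSum a ε + 1))
      (fun _ => (1 : ℝ)) x

/-- The comparison Gaussian density
`γ(x) = (2π ∑ a_i²)^{−1/2} · exp(−x²/(2 ∑ a_i²))`. -/
noncomputable def gaussianDensity {n : ℕ} (a : Fin n → ℝ) (x : ℝ) : ℝ :=
  (Real.sqrt (2 * π * ∑ i, (a i) ^ 2))⁻¹ *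
    Real.exp (-x ^ 2 / (2 * ∑ i, (a i) ^ 2))

/-!
Write `F` and `γ` for the two densities and `s = ∑ i, a i ^ 2`, so that
`∫ (F - γ)² = ∫ F² - 2 ∫ F γ + ∫ γ²`.

By 1-separation the `2 ^ n` intervals `[S_ε - 1, S_ε + 1]` meet only in endpoints, so
`∫ F² = 2⁻ⁿ / 2`, and `s ≥ 1` once `n ≥ 1`. The remaining terms contribute nothing positive: `F`
has second moment `s + 1/3 ≤ 2s`, so Jensen's inequality for `exp` gives
`∫ F γ ≥ (2πs)^(-1/2) exp (-(s + 1/3) / (2s)) ≥ (2πs)^(-1/2) e⁻¹`, while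
`∫ γ² = (2πs)^(-1/2) / √2` and `1 / √2 ≤ 2 e⁻¹`.
-/

section Density

variable {α : Type*} [MeasurableSpace α] {μ : Measure α}
  {E : Type*} [NormedAddCommGroup E] [NormedSpace ℝ E] {p : α → ℝ}

lemma toNNReal_smul_ae_eq (hp : 0 ≤ᵐ[μ] p) (f : α → E) :
    (fun x => (p x).toNNReal • f x) =ᵐ[μ] fun x => p x • f x := by
  filter_upwards [hp] with x hx
  rw [NNReal.smul_def, Real.coe_toNNReal _ hx]

lemma integral_withDensity_ofReal (hpm : AEMeasurable p μ) (hp : 0 ≤ᵐ[μ] p) (f : α → E) :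
    ∫ x, f x ∂μ.withDensity (fun x => ENNReal.ofReal (p x)) = ∫ x, p x • f x ∂μ :=
  (integral_withDensity_eq_integral_smul₀ hpm.real_toNNReal f).trans
    (integral_congr_ae (toNNReal_smul_ae_eq hp f))

lemma integrable_withDensity_ofReal_iff (hpm : AEMeasurable p μ) (hp : 0 ≤ᵐ[μ] p) {f : α → E} :
    Integrable f (μ.withDensity fun x => ENNReal.ofReal (p x)) ↔
      Integrable (fun x => p x • f x) μ :=
  (integrable_withDensity_iff_integrable_smul₀ hpm.real_toNNReal).trans
    (integrable_congr (toNNReal_smul_ae_eq hp f))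

lemma isProbabilityMeasure_withDensity_ofReal (hp : 0 ≤ᵐ[μ] p) (hp_one : ∫ x, p x ∂μ = 1) :
    IsProbabilityMeasure (μ.withDensity fun x => ENNReal.ofReal (p x)) where
  measure_univ := by
    rw [withDensity_apply _ MeasurableSet.univ, Measure.restrict_univ,
      ← ofReal_integral_eq_lintegral_ofReal (.of_integral_ne_zero (by simp [hp_one])) hp, hp_one,
      ENNReal.ofReal_one]

lemma convexOn_map_integral_smul_le [CompleteSpace E] {φ : E → ℝ} {s : Set E} {f : α → E}
    (hφ : ConvexOn ℝ s φ) (hφc : ContinuousOn φ s) (hs : IsClosed s) (hfs : ∀ᵐ x ∂μ, f x ∈ s)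
    (hp : 0 ≤ᵐ[μ] p) (hp_one : ∫ x, p x ∂μ = 1) (hf : Integrable (fun x => p x • f x) μ)
    (hφf : Integrable (fun x => p x * φ (f x)) μ) :
    φ (∫ x, p x • f x ∂μ) ≤ ∫ x, p x * φ (f x) ∂μ := by
  have hpm : AEMeasurable p μ :=
    (Integrable.of_integral_ne_zero (by simp [hp_one])).aemeasurable
  have := isProbabilityMeasure_withDensity_ofReal hp hp_one
  simpa only [integral_withDensity_ofReal hpm hp, smul_eq_mul] using
    hφ.map_integral_le hφc hs ((withDensity_absolutelyContinuous _ _).ae_le hfs)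
      ((integrable_withDensity_ofReal_iff hpm hp).2 hf)
      ((integrable_withDensity_ofReal_iff hpm hp).2 hφf)

end Density

section AEDisjoint

lemma integral_sum_indicator_one_sq {α ι : Type*} [MeasurableSpace α] {μ : Measure α}
    [Fintype ι] {s : ι → Set α} (hs : ∀ i, MeasurableSet (s i))
    (hs_fin : ∀ i, μ (s i) ≠ ⊤) (hd : Pairwise (Function.onFun (AEDisjoint μ) s)) :
    ∫ x, (∑ i, (s i).indicator (fun _ => (1 : ℝ)) x) ^ 2 ∂μ = ∑ i, μ.real (s i) := by
  have hmul (i j : ι) (x : α) : (s i).indicator (fun _ => (1 : ℝ)) x *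
      (s j).indicator (fun _ => (1 : ℝ)) x = (s i ∩ s j).indicator 1 x :=
    (congrFun Set.inter_indicator_one x).symm
  have hint (i j : ι) : Integrable ((s i ∩ s j).indicator (1 : α → ℝ)) μ :=
    (integrable_indicator_iff ((hs i).inter (hs j))).2
      (integrableOn_const (measure_ne_top_of_subset Set.inter_subset_left (hs_fin i)))
  simp_rw [sq, sum_mul_sum, hmul]
  rw [integral_finsetSum _ fun i _ => integrable_finsetSum _ fun j _ => hint i j]
  refine sum_congr rfl fun i _ => ?_
  rw [integral_finsetSum _ fun j _ => hint i j, Fintype.sum_eq_single i fun j hj => ?_]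
  · rw [Set.inter_self, integral_indicator_one (hs i)]
  · rw [integral_indicator_one ((hs i).inter (hs j)), measureReal_def, hd hj.symm,
      ENNReal.toReal_zero]

lemma aedisjoint_Icc_of_two_mul_le_abs_sub {x y r : ℝ} (h : 2 * r ≤ |x - y|) :
    AEDisjoint volume (Set.Icc (x - r) (x + r)) (Set.Icc (y - r) (y + r)) := by
  rw [AEDisjoint, Set.Icc_inter_Icc, Real.volume_Icc, ENNReal.ofReal_eq_zero, sub_nonpos]
  rcases le_abs.1 h with h | h
  · exact inf_le_right.trans (le_sup_of_le_left (by linarith))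
  · exact inf_le_left.trans (le_sup_of_le_right (by linarith))

end AEDisjoint

section SignedSum

variable {n : ℕ} {a : Fin n → ℝ}

lemma signedSum_eq_two_mul_sum_sub (a : Fin n → ℝ) (ε : Fin n → Bool) :
    signedSum a ε = 2 * ∑ i with ε i, a i - ∑ i, a i := by
  rw [signedSum, sum_filter, mul_sum, ← sum_sub_distrib]
  refine sum_congr rfl fun i _ => ?_
  split_ifs <;> ring

lemma SepSums.two_le_abs_signedSum_sub (ha : SepSums a) {ε η : Fin n → Bool} (hne : ε ≠ η) :
    2 ≤ |signedSum a ε - signedSum a η| := by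
  have hfilter : (univ.filter fun i => ε i = true) ≠ univ.filter fun i => η i = true := by
    refine fun h => hne (funext fun i => Bool.eq_iff_iff.2 ?_)
    simpa only [mem_filter_univ] using Finset.ext_iff.1 h i
  have hsub : signedSum a ε - signedSum a η = 2 * (∑ i with ε i, a i - ∑ i with η i, a i) := by
    simp only [signedSum_eq_two_mul_sum_sub]
    ring
  rw [hsub, abs_mul, abs_two]
  linarith [ha _ _ hfilter]

lemma SepSums.one_le_abs (ha : SepSums a) (i : Fin n) : 1 ≤ |a i| := by
  simpa using ha {i} ∅ (singleton_ne_empty i)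

lemma SepSums.one_le_sum_sq (ha : SepSums a) (hn : n ≠ 0) : 1 ≤ ∑ i, a i ^ 2 := by
  let i : Fin n := ⟨0, Nat.pos_of_ne_zero hn⟩
  calc 1 ≤ a i ^ 2 := (one_le_sq_iff_one_le_abs _).2 (ha.one_le_abs i)
    _ ≤ ∑ i, a i ^ 2 := single_le_sum (fun j _ => sq_nonneg (a j)) (mem_univ i)

lemma sum_const_signs (n : ℕ) (c : ℝ) : ∑ _ε : Fin n → Bool, c = 2 ^ n * c := by simp

lemma signedSum_cons (a : Fin (n + 1) → ℝ) (b : Bool) (ε : Fin n → Bool) :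
    signedSum a (Fin.cons b ε) = (if b then a 0 else -a 0) + signedSum (Fin.tail a) ε := by
  simp [signedSum, Fin.sum_univ_succ, Fin.tail]

lemma sum_signedSum_sq (a : Fin n → ℝ) :
    ∑ ε : Fin n → Bool, signedSum a ε ^ 2 = 2 ^ n * ∑ i, a i ^ 2 := by
  induction n with
  | zero => simp [signedSum]
  | succ n ih =>
    have parallelogram (x y : ℝ) : (x + y) ^ 2 + (-x + y) ^ 2 = 2 * x ^ 2 + 2 * y ^ 2 := by ring
    calc ∑ ε : Fin (n + 1) → Bool, signedSum a ε ^ 2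
        = ∑ ε : Fin n → Bool, (2 * a 0 ^ 2 + 2 * signedSum (Fin.tail a) ε ^ 2) := by
          rw [← (Fin.consEquiv fun _ => Bool).sum_comp, Fintype.sum_prod_type_right]
          simp [Fin.consEquiv, signedSum_cons, parallelogram]
      _ = 2 ^ (n + 1) * ∑ i, a i ^ 2 := by
          rw [sum_add_distrib, ← mul_sum univ (signedSum (Fin.tail a) · ^ 2), ih, sum_const_signs,
            Fin.sum_univ_succ]
          simp only [Fin.tail]
          ring

end SignedSum

section SmoothedDensity

variable {n : ℕ} (a : Fin n → ℝ)

lemma smoothedDensity_eq_inv_mul_sum (x : ℝ) :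
    smoothedDensity a x = (2 * 2 ^ n)⁻¹ * ∑ ε : Fin n → Bool,
      (Set.Icc (signedSum a ε - 1) (signedSum a ε + 1)).indicator (fun _ => 1) x := by
  rw [smoothedDensity, ← mul_sum]
  ring

lemma smoothedDensity_nonneg (x : ℝ) : 0 ≤ smoothedDensity a x := by
  rw [smoothedDensity_eq_inv_mul_sum]
  exact mul_nonneg (by positivity)
    (sum_nonneg fun ε _ => Set.indicator_nonneg (fun _ _ => zero_le_one) x)

lemma smoothedDensity_mul (f : ℝ → ℝ) (x : ℝ) :
    smoothedDensity a x * f x = (2 * 2 ^ n)⁻¹ * ∑ ε : Fin n → Bool,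
      (Set.Icc (signedSum a ε - 1) (signedSum a ε + 1)).indicator f x := by
  rw [smoothedDensity_eq_inv_mul_sum, mul_assoc, sum_mul]
  simp only [Set.indicator_apply, ite_mul, one_mul, zero_mul]

variable {f : ℝ → ℝ}

lemma integrable_smoothedDensity_mul (hf : LocallyIntegrable f) :
    Integrable fun x => smoothedDensity a x * f x := by
  simp only [smoothedDensity_mul]
  exact (integrable_finsetSum _ fun ε _ =>
    (hf.integrableOn_isCompact isCompact_Icc).integrable_indicator measurableSet_Icc).const_mul _

lemma integral_smoothedDensity_mul (hf : LocallyIntegrable f) :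
    ∫ x, smoothedDensity a x * f x = (2 * 2 ^ n)⁻¹ * ∑ ε : Fin n → Bool,
      ∫ x in (signedSum a ε - 1)..(signedSum a ε + 1), f x := by
  simp only [smoothedDensity_mul]
  rw [integral_const_mul, integral_finsetSum _ fun ε _ =>
    (hf.integrableOn_isCompact isCompact_Icc).integrable_indicator measurableSet_Icc]
  congr! 2 with ε
  rw [integral_indicator measurableSet_Icc, integral_Icc_eq_integral_Ioc,
    intervalIntegral.integral_of_le (by linarith)]

lemma integrable_smoothedDensity : Integrable (smoothedDensity a) := by
  simpa using integrable_smoothedDensity_mul a (locallyIntegrable_const (1 : ℝ))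

lemma integrable_smoothedDensity_sq : Integrable fun x => smoothedDensity a x ^ 2 := by
  simpa only [sq] using
    integrable_smoothedDensity_mul a (integrable_smoothedDensity a).locallyIntegrable

lemma integral_smoothedDensity : ∫ x, smoothedDensity a x = 1 := by
  have h := integral_smoothedDensity_mul a (locallyIntegrable_const (1 : ℝ))
  simp only [mul_one, intervalIntegral.integral_const, add_sub_sub_cancel, smul_eq_mul,
    sum_const_signs] at h
  rw [h]
  field_simp
  norm_num

lemma integral_smoothedDensity_mul_sq :
    ∫ x, smoothedDensity a x * x ^ 2 = ∑ i, a i ^ 2 + 1 / 3 := by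
  have hcube (s : ℝ) : ((s + 1) ^ 3 - (s - 1) ^ 3) / 3 = 2 * s ^ 2 + 2 / 3 := by ring
  have h := integral_smoothedDensity_mul a (continuous_pow 2).locallyIntegrable
  norm_num only [integral_pow, hcube] at h
  rw [sum_add_distrib, ← mul_sum, sum_signedSum_sq, sum_const_signs] at h
  rw [h]
  field_simp

lemma SepSums.integral_smoothedDensity_sq {a : Fin n → ℝ} (ha : SepSums a) :
    ∫ x, smoothedDensity a x ^ 2 = (2 * 2 ^ n)⁻¹ := by
  have hd : Pairwise (Function.onFun (AEDisjoint volume) fun ε : Fin n → Bool =>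
      Set.Icc (signedSum a ε - 1) (signedSum a ε + 1)) := fun ε η hne =>
    aedisjoint_Icc_of_two_mul_le_abs_sub (by simpa using ha.two_le_abs_signedSum_sub hne)
  simp only [smoothedDensity_eq_inv_mul_sum, mul_pow]
  rw [integral_const_mul, integral_sum_indicator_one_sq (fun _ => measurableSet_Icc)
    (fun _ => measure_Icc_lt_top.ne) hd]
  have hvol (s : ℝ) : volume.real (Set.Icc (s - 1) (s + 1)) = 2 := by
    rw [Real.volume_real_Icc_of_le (by linarith)]
    ring
  simp only [hvol, sum_const_signs]
  field_simp

end SmoothedDensity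

section Gaussian

open ProbabilityTheory NNReal

variable (m : ℝ) (v : ℝ≥0)

lemma gaussianPDFReal_sq (x : ℝ) :
    gaussianPDFReal m v x ^ 2 =
      (√(2 * π * v))⁻¹ * (√2)⁻¹ * gaussianPDFReal m (v / 2) x := by
  have hsqrt : √(2 * π * v) = √2 * √(2 * π * (v / 2 : ℝ≥0)) := by
    rw [← Real.sqrt_mul zero_le_two]
    congr 1
    push_cast
    ring
  have hexp : exp (-(x - m) ^ 2 / (2 * v)) ^ 2 = exp (-(x - m) ^ 2 / (2 * (v / 2 : ℝ≥0))) := by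
    rw [← exp_nat_mul]
    congr 1
    push_cast
    ring
  rw [gaussianPDFReal, gaussianPDFReal, mul_pow, hexp, sq]
  nth_rw 2 [hsqrt]
  ring

lemma integrable_gaussianPDFReal_sq : Integrable fun x => gaussianPDFReal m v x ^ 2 := by
  simp only [gaussianPDFReal_sq]
  exact (integrable_gaussianPDFReal m (v / 2)).const_mul _

lemma integral_gaussianPDFReal_sq :
    ∫ x, gaussianPDFReal m v x ^ 2 = (√(2 * π * v))⁻¹ * (√2)⁻¹ := by
  rcases eq_or_ne v 0 with rfl | hv
  · simp
  · simp only [gaussianPDFReal_sq]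
    rw [integral_const_mul, integral_gaussianPDFReal_eq_one m (div_ne_zero hv two_ne_zero), mul_one]

variable {m v} {p : ℝ → ℝ}

lemma integrable_mul_exp_neg_sq_div (hp : Integrable p) :
    Integrable fun x => p x * exp (-(x - m) ^ 2 / (2 * v)) := by
  refine hp.mul_bdd (c := 1) (by fun_prop) (.of_forall fun x => ?_)
  rw [norm_of_nonneg (exp_nonneg _), exp_le_one_iff]
  exact div_nonpos_of_nonpos_of_nonneg (neg_nonpos.2 (sq_nonneg _)) (by positivity)

lemma integrable_mul_gaussianPDFReal (hp : Integrable p) :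
    Integrable fun x => p x * gaussianPDFReal m v x := by
  simp only [gaussianPDFReal, mul_left_comm (p _)]
  exact (integrable_mul_exp_neg_sq_div hp).const_mul _

lemma inv_sqrt_mul_exp_le_integral_mul_gaussianPDFReal (hp : 0 ≤ᵐ[volume] p)
    (hp_one : ∫ x, p x = 1) (hp_var : Integrable fun x => p x * (x - m) ^ 2) :
    (√(2 * π * v))⁻¹ * exp (-(∫ x, p x * (x - m) ^ 2) / (2 * v)) ≤
      ∫ x, p x * gaussianPDFReal m v x := by
  have hmul (x : ℝ) : p x * (-(x - m) ^ 2 / (2 * v)) = -(p x * (x - m) ^ 2) / (2 * v) := by ring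
  have hmean : ∫ x, p x * (-(x - m) ^ 2 / (2 * v)) = -(∫ x, p x * (x - m) ^ 2) / (2 * v) := by
    simp only [hmul, integral_div, integral_neg]
  have hjensen := convexOn_map_integral_smul_le (f := fun x => -(x - m) ^ 2 / (2 * v))
    convexOn_exp continuousOn_exp isClosed_univ (.of_forall fun _ => Set.mem_univ _) hp hp_one
    (by simpa only [smul_eq_mul, hmul] using hp_var.fun_neg.div_const (2 * v))
    (integrable_mul_exp_neg_sq_div (.of_integral_ne_zero (by simp [hp_one])))
  simp only [smul_eq_mul, hmean] at hjensen
  simp only [gaussianPDFReal, mul_left_comm (p _)]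
  rw [integral_const_mul]
  gcongr

lemma inv_sqrt_two_le_two_mul_exp_neg_one : (√2)⁻¹ ≤ 2 * exp (-1) := by
  have hexp : exp 1 ≤ 2 * √2 := calc
    exp 1 ≤ 2 * 1.4 := exp_one_lt_d9.le.trans (by norm_num)
    _ ≤ 2 * √2 := by
      gcongr
      exact le_sqrt_of_sq_le (by norm_num)
  rw [exp_neg, ← div_eq_mul_inv, inv_le_comm₀ (by positivity) (by positivity), inv_div]
  linarith

lemma integral_gaussianPDFReal_sq_le_two_mul_integral_mul (hp : 0 ≤ᵐ[volume] p)
    (hp_one : ∫ x, p x = 1) (hp_var : Integrable fun x => p x * (x - m) ^ 2)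
    (hv : ∫ x, p x * (x - m) ^ 2 ≤ 2 * v) :
    ∫ x, gaussianPDFReal m v x ^ 2 ≤ 2 * ∫ x, p x * gaussianPDFReal m v x := by
  have hexp : -1 ≤ -(∫ x, p x * (x - m) ^ 2) / (2 * v) := by
    rw [neg_div, neg_le_neg_iff]
    exact div_le_one_of_le₀ hv (by positivity)
  calc ∫ x, gaussianPDFReal m v x ^ 2
      = (√(2 * π * v))⁻¹ * (√2)⁻¹ := integral_gaussianPDFReal_sq m v
    _ ≤ (√(2 * π * v))⁻¹ * (2 * exp (-1)) := by
        gcongr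
        exact inv_sqrt_two_le_two_mul_exp_neg_one
    _ ≤ (√(2 * π * v))⁻¹ * (2 * exp (-(∫ x, p x * (x - m) ^ 2) / (2 * v))) := by gcongr
    _ ≤ 2 * ∫ x, p x * gaussianPDFReal m v x := by
        rw [mul_left_comm]
        gcongr
        exact inv_sqrt_mul_exp_le_integral_mul_gaussianPDFReal hp hp_one hp_var

lemma integral_sub_gaussianPDFReal_sq_le (hp : 0 ≤ᵐ[volume] p) (hp_one : ∫ x, p x = 1)
    (hp_sq : Integrable fun x => p x ^ 2) (hp_var : Integrable fun x => p x * (x - m) ^ 2)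
    (hv : ∫ x, p x * (x - m) ^ 2 ≤ 2 * v) :
    ∫ x, (p x - gaussianPDFReal m v x) ^ 2 ≤ ∫ x, p x ^ 2 := by
  have hp_int : Integrable p := .of_integral_ne_zero (by simp [hp_one])
  have hcross := (integrable_mul_gaussianPDFReal (m := m) (v := v) hp_int).const_mul 2
  calc ∫ x, (p x - gaussianPDFReal m v x) ^ 2
      = (∫ x, p x ^ 2) - 2 * (∫ x, p x * gaussianPDFReal m v x) +
          ∫ x, gaussianPDFReal m v x ^ 2 := by
        simp only [sub_sq, mul_assoc]
        rw [integral_add (by exact hp_sq.sub hcross) (integrable_gaussianPDFReal_sq m v),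
          integral_sub hp_sq hcross, integral_const_mul]
    _ ≤ ∫ x, p x ^ 2 := by
        linarith [integral_gaussianPDFReal_sq_le_two_mul_integral_mul hp hp_one hp_var hv]

lemma gaussianDensity_eq_gaussianPDFReal {n : ℕ} (a : Fin n → ℝ) :
    gaussianDensity a = gaussianPDFReal 0 (∑ i, a i ^ 2).toNNReal := by
  funext x
  rw [gaussianDensity, gaussianPDFReal, sub_zero,
    Real.coe_toNNReal _ (sum_nonneg fun i _ => sq_nonneg (a i))]

end Gaussian

lemma integral_smoothedDensity_sub_gaussianDensity_sq_le {n : ℕ} {a : Fin n → ℝ}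
    (ha : 1 / 3 ≤ ∑ i, a i ^ 2) :
    ∫ x, (smoothedDensity a x - gaussianDensity a x) ^ 2 ≤ ∫ x, smoothedDensity a x ^ 2 := by
  rw [gaussianDensity_eq_gaussianPDFReal]
  refine integral_sub_gaussianPDFReal_sq_le (.of_forall (smoothedDensity_nonneg a))
    (integral_smoothedDensity a) (integrable_smoothedDensity_sq a) ?_ ?_
  · simpa only [sub_zero] using
      integrable_smoothedDensity_mul a (continuous_pow 2).locallyIntegrable
  · simp only [sub_zero]
    rw [integral_smoothedDensity_mul_sq, Real.coe_toNNReal _ (by linarith)]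
    linarith

theorem stmt_17_general {n : ℕ} (hn : n ≠ 0) {a : Fin n → ℝ} (ha : SepSums a) :
    ∫ x : ℝ, (smoothedDensity a x - gaussianDensity a x) ^ 2 ≤ 2 ^ (-(n : ℝ)) / 2 := by
  calc ∫ x : ℝ, (smoothedDensity a x - gaussianDensity a x) ^ 2
      ≤ ∫ x, smoothedDensity a x ^ 2 :=
        integral_smoothedDensity_sub_gaussianDensity_sq_le (by linarith [ha.one_le_sum_sq hn])
    _ = (2 * 2 ^ n)⁻¹ := ha.integral_smoothedDensity_sq
    _ = 2 ^ (-(n : ℝ)) / 2 := by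
        rw [rpow_neg zero_le_two, rpow_natCast]
        ring

theorem stmt_17 (c δ : ℝ) (hc : 0 < c) (hδ : 0 < δ) :
    ∃ N : ℕ, ∀ n : ℕ, N ≤ n → ∀ a : Fin n → ℝ, (∀ i, 0 < a i) →
      SepSums a → ∀ A : ℝ, IsGreatest (Set.range a) A →
      A ^ 2 ≤ c * (n : ℝ) ^ (-(1/2) : ℝ) * ∑ i, (a i) ^ 2 →
      (∫ x : ℝ, (smoothedDensity a x - gaussianDensity a x) ^ 2) ≤
        (1 + δ) * 2 ^ (-(n : ℝ)) := by
  refine ⟨1, fun n hn a _ ha _ _ _ => (stmt_17_general (Nat.ne_of_gt hn) ha).trans ?_⟩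
  nlinarith [rpow_pos_of_pos two_pos (-(n : ℝ))]
end

section
/- For all c > 0, ε > 0 and δ > 0 there exists N such that for all n ≥ N and all families a : Fin n → ℝ of positive reals whose maximum A = max_i a_i satisfies A² ≤ c · n^{−2/3 − ε} · ∑_{i=1}^{n} a_i², the distribution μ = 2^{−n} ∑_{ε ∈ {−1,1}^n} δ_{S_ε} of the random walk satisfies sup over all real t of | μ((−∞, t]) − ∫_{−∞}^{t} γ(y) dy | ≤ δ, where γ is the comparison Gaussian density; equivalently, 2^{−n} · #{ε ∈ {−1,1}^n : S_ε ≤ t} differs from ∫_{−∞}^{t} γ(y) dy by at most δ for every t. -/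
open Real MeasureTheory Finset

/-!
Rescale the walk to unit variance. Its characteristic function at `u` is then `∏ i, cos (u * b i)`
with `∑ i, b i ^ 2 = 1`, and since `cos x = exp (-x ^ 2 / 2) + O(x ^ 4)`, this product differs from
`exp (-u ^ 2 / 2)` by at most `u ^ 4 * max_i b i ^ 2`. So whenever the largest step is negligible
compared with the standard deviation, Lévy's theorem gives weak convergence to the standard
Gaussian. The limiting distribution function is continuous, so by Pólya's theorem the distribution
functions converge uniformly.
-/

open Filter ProbabilityTheory Topology
open scoped NNReal

section DistributionFunctions

variable {ι : Type*} {l : Filter ι}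

lemma tendstoLocallyUniformly_of_monotone {α : Type*} [LinearOrder α] [TopologicalSpace α]
    [OrderTopology α] {F : ι → α → ℝ} {f : α → ℝ} (hF : ∀ i, Monotone (F i)) (hf : Continuous f)
    (hlim : ∀ x, Tendsto (fun i ↦ F i x) l (𝓝 (f x))) : TendstoLocallyUniformly F f l := by
  rw [Metric.tendstoLocallyUniformly_iff]
  intro r hr x
  obtain ⟨u, v, -, huv, hball⟩ := exists_Icc_mem_subset_of_mem_nhds
    (hf.continuousAt.preimage_mem_nhds (Metric.ball_mem_nhds (f x) (by positivity : 0 < r / 4)))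
  have hclose : ∀ y ∈ Set.Icc u v, |f y - f x| < r / 4 := fun y hy ↦ hball hy
  have hle : u ≤ v := (mem_of_mem_nhds huv).1.trans (mem_of_mem_nhds huv).2
  have hfu := abs_lt.1 (hclose u (Set.left_mem_Icc.2 hle))
  have hfv := abs_lt.1 (hclose v (Set.right_mem_Icc.2 hle))
  refine ⟨Set.Icc u v, huv, ?_⟩
  filter_upwards [(hlim u).eventually_const_lt (sub_lt_self _ (by positivity : 0 < r / 4)),
    (hlim v).eventually_lt_const (lt_add_of_pos_right _ (by positivity : 0 < r / 4))]
    with i hFu hFv y hy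
  have hfy := abs_lt.1 (hclose y hy)
  have hlow : F i u ≤ F i y := hF i hy.1
  have hhigh : F i y ≤ F i v := hF i hy.2
  rw [Real.dist_eq, abs_lt]
  constructor <;> linarith

lemma continuous_cdf (μ : Measure ℝ) [IsProbabilityMeasure μ] [NullSingletonClass μ] :
    Continuous (cdf μ) := by
  refine continuous_iff_continuousAt.2 fun x ↦ ?_
  rw [(monotone_cdf μ).continuousAt_iff_leftLim_eq_rightLim, StieltjesFunction.rightLim_eq]
  have hjump : ENNReal.ofReal (cdf μ x - Function.leftLim (cdf μ) x) = 0 := by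
    rw [← StieltjesFunction.measure_singleton, measure_cdf, measure_singleton]
  exact ((monotone_cdf μ).leftLim_le le_rfl).antisymm
    (sub_nonpos.1 (ENNReal.ofReal_eq_zero.1 hjump))

lemma tendstoUniformly_cdf {μ : ι → Measure ℝ} {ν : Measure ℝ} (hν : Continuous (cdf ν))
    (hlim : ∀ x, Tendsto (fun i ↦ cdf (μ i) x) l (𝓝 (cdf ν x))) :
    TendstoUniformly (fun i ↦ cdf (μ i)) (cdf ν) l := by
  rw [Metric.tendstoUniformly_iff]
  intro r hr
  obtain ⟨p, hp⟩ :=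
    ((tendsto_cdf_atBot ν).eventually_lt_const (by positivity : 0 < r / 2)).exists
  obtain ⟨q, hq⟩ :=
    ((tendsto_cdf_atTop ν).eventually_const_lt (by linarith : 1 - r / 2 < 1)).exists
  have hcompact : TendstoUniformlyOn (fun i ↦ cdf (μ i)) (cdf ν) l (Set.Icc p q) :=
    (tendstoLocallyUniformlyOn_iff_tendstoUniformlyOn_of_compact isCompact_Icc).1
      (tendstoLocallyUniformly_of_monotone
        (fun i ↦ monotone_cdf (μ i)) hν hlim).tendstoLocallyUniformlyOn
  filter_upwards [Metric.tendstoUniformlyOn_iff.1 hcompact r hr,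
    (hlim p).eventually_lt_const hp, (hlim q).eventually_const_lt hq] with i hi hip hiq x
  rcases lt_or_ge x p with hxp | hpx
  · have hμx := monotone_cdf (μ i) hxp.le
    have hνx := monotone_cdf ν hxp.le
    rw [Real.dist_eq, abs_lt]
    constructor <;> linarith [cdf_nonneg (μ i) x, cdf_nonneg ν x]
  rcases lt_or_ge q x with hqx | hxq
  · have hμx := monotone_cdf (μ i) hqx.le
    have hνx := monotone_cdf ν hqx.le
    rw [Real.dist_eq, abs_lt]
    constructor <;> linarith [cdf_le_one (μ i) x, cdf_le_one ν x]
  · exact hi x ⟨hpx, hxq⟩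

lemma tendstoUniformly_cdf_of_tendsto {μ : ι → ProbabilityMeasure ℝ} {ν : ProbabilityMeasure ℝ}
    [NullSingletonClass (ν : Measure ℝ)] (h : Tendsto μ l (𝓝 ν)) :
    TendstoUniformly (fun i ↦ cdf (μ i : Measure ℝ)) (cdf (ν : Measure ℝ)) l := by
  refine tendstoUniformly_cdf (continuous_cdf _) fun x ↦ ?_
  simp only [cdf_eq_real]
  refine (ENNReal.tendsto_toReal (measure_ne_top _ _)).comp
    (ProbabilityMeasure.tendsto_measure_of_null_frontier_of_tendsto' h ?_)
  rw [frontier_Iic, measure_singleton]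

end DistributionFunctions

section CosineProducts

lemma norm_prod_sub_prod_le_sum_norm_sub {ι R : Type*} [NormedCommRing R] [NormOneClass R]
    {s : Finset ι} {f g : ι → R} (hf : ∀ i ∈ s, ‖f i‖ ≤ 1) (hg : ∀ i ∈ s, ‖g i‖ ≤ 1) :
    ‖∏ i ∈ s, f i - ∏ i ∈ s, g i‖ ≤ ∑ i ∈ s, ‖f i - g i‖ := by
  induction s using Finset.cons_induction with
  | empty => simp
  | cons j s hj ih =>
    rw [forall_mem_cons] at hf hg
    have hprod : ‖∏ i ∈ s, f i‖ ≤ 1 :=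
      (norm_prod_le s f).trans (prod_le_one (fun _ _ ↦ norm_nonneg _) hf.2)
    rw [prod_cons, prod_cons, sum_cons]
    calc ‖f j * ∏ i ∈ s, f i - g j * ∏ i ∈ s, g i‖
        = ‖(f j - g j) * ∏ i ∈ s, f i + g j * (∏ i ∈ s, f i - ∏ i ∈ s, g i)‖ := by ring_nf
      _ ≤ ‖f j - g j‖ * ‖∏ i ∈ s, f i‖ + ‖g j‖ * ‖∏ i ∈ s, f i - ∏ i ∈ s, g i‖ :=
        norm_add_le_of_le (norm_mul_le _ _) (norm_mul_le _ _)
      _ ≤ ‖f j - g j‖ + ∑ i ∈ s, ‖f i - g i‖ :=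
        add_le_add (mul_le_of_le_one_right (norm_nonneg _) hprod)
          ((mul_le_of_le_one_left (norm_nonneg _) hg.1).trans (ih hf.2 hg.2))

lemma abs_cos_sub_exp_neg_sq_div_two_le (x : ℝ) : |cos x - exp (-(x ^ 2 / 2))| ≤ x ^ 4 := by
  rcases le_total |x| 1 with hx | hx
  · have hx2 : x ^ 2 ≤ 1 := (sq_le_one_iff_abs_le_one x).2 hx
    have hcos := abs_le.1 (cos_bound hx)
    have hexp := abs_le.1 (abs_exp_sub_one_sub_id_le (x := -(x ^ 2 / 2)) (by
      rw [abs_neg, abs_of_nonneg (by positivity)]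
      linarith))
    rw [Even.pow_abs (by decide)] at hcos
    rw [abs_le]
    constructor <;> nlinarith
  · have hx2 : 1 ≤ x ^ 2 := (one_le_sq_iff_one_le_abs x).2 hx
    have hcos : 1 - x ^ 2 / 2 ≤ cos x := one_sub_sq_div_two_le_cos
    have hexp : exp (-(x ^ 2 / 2)) ≤ 1 := exp_le_one_iff.2 (by linarith)
    rw [abs_le]
    constructor <;> nlinarith [exp_pos (-(x ^ 2 / 2)), cos_le_one x]

lemma abs_prod_cos_sub_exp_le {ι : Type*} {s : Finset ι} {x : ι → ℝ} {M : ℝ}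
    (hx : ∀ i ∈ s, x i ^ 2 ≤ M) :
    |∏ i ∈ s, cos (x i) - exp (-((∑ i ∈ s, x i ^ 2) / 2))| ≤ M * ∑ i ∈ s, x i ^ 2 := by
  rw [sum_div, ← sum_neg_distrib, exp_sum]
  calc |∏ i ∈ s, cos (x i) - ∏ i ∈ s, exp (-(x i ^ 2 / 2))|
      ≤ ∑ i ∈ s, |cos (x i) - exp (-(x i ^ 2 / 2))| :=
        norm_prod_sub_prod_le_sum_norm_sub (s := s) (f := fun i ↦ cos (x i))
          (g := fun i ↦ exp (-(x i ^ 2 / 2))) (fun i _ ↦ abs_cos_le_one (x i)) fun i _ ↦ by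
          rw [norm_of_nonneg (exp_pos _).le, exp_le_one_iff, neg_nonpos]
          positivity
    _ ≤ ∑ i ∈ s, M * x i ^ 2 := sum_le_sum fun i hi ↦
        calc |cos (x i) - exp (-(x i ^ 2 / 2))| ≤ x i ^ 4 := abs_cos_sub_exp_neg_sq_div_two_le _
          _ = x i ^ 2 * x i ^ 2 := by ring
          _ ≤ M * x i ^ 2 := by gcongr; exact hx i hi
    _ = M * ∑ i ∈ s, x i ^ 2 := (mul_sum _ _ _).symm

end CosineProducts

section WalkMeasure

variable {n : ℕ}

lemma signedSum_div (a : Fin n → ℝ) (r : ℝ) (η : Fin n → Bool) :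
    signedSum (fun i ↦ a i / r) η = signedSum a η / r := by
  simp only [signedSum, sum_div, ite_div, neg_div]

/-- The law of the random walk `±a₁ ± ⋯ ± aₙ`, that is, the measure `μ = 2⁻ⁿ ∑_η δ_{S_η}`. -/
noncomputable def walkMeasure (a : Fin n → ℝ) : Measure ℝ :=
  ((2 : ENNReal) ^ n)⁻¹ • ∑ η : Fin n → Bool, Measure.dirac (signedSum a η)

instance (a : Fin n → ℝ) : IsProbabilityMeasure (walkMeasure a) where
  measure_univ := by
    simpa [walkMeasure] using ENNReal.inv_mul_cancel (a := 2 ^ n) (by simp) (by simp)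

lemma cdf_walkMeasure (a : Fin n → ℝ) (t : ℝ) :
    cdf (walkMeasure a) t =
      ((univ.filter fun η : Fin n → Bool ↦ signedSum a η ≤ t).card : ℝ) / 2 ^ n := by
  rw [cdf_eq_real]
  simp [walkMeasure, measureReal_def, Set.indicator_apply, sum_boole, div_eq_inv_mul]

lemma cdf_walkMeasure_div (a : Fin n → ℝ) {r : ℝ} (hr : 0 < r) (t : ℝ) :
    cdf (walkMeasure fun i ↦ a i / r) (t / r) = cdf (walkMeasure a) t := by
  simp only [cdf_walkMeasure, signedSum_div, div_le_div_iff_of_pos_right hr]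

lemma integral_walkMeasure {E : Type*} [NormedAddCommGroup E] [NormedSpace ℝ E] [CompleteSpace E]
    (a : Fin n → ℝ) (f : ℝ → E) :
    ∫ x, f x ∂walkMeasure a = ((2 : ℝ) ^ n)⁻¹ • ∑ η, f (signedSum a η) := by
  rw [walkMeasure, integral_smul_measure,
    integral_finsetSum_measure fun _ _ ↦ integrable_dirac enorm_lt_top]
  simp

lemma sum_exp_mul_signedSum (a : Fin n → ℝ) (z : ℂ) :
    ∑ η, Complex.exp (z * signedSum a η) = ∏ i, 2 * Complex.cosh (z * a i) := by
  have hfactor (i : Fin n) : 2 * Complex.cosh (z * a i) =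
      ∑ e : Bool, Complex.exp (z * ((if e then a i else -a i : ℝ) : ℂ)) := by
    simp [Complex.two_cosh]
  simp only [hfactor, prod_univ_sum, Fintype.piFinset_univ, signedSum, Complex.ofReal_sum, mul_sum,
    Complex.exp_sum]

lemma charFun_walkMeasure (a : Fin n → ℝ) (u : ℝ) :
    charFun (walkMeasure a) u = ((∏ i, cos (u * a i) : ℝ) : ℂ) := by
  have hexp (x : ℝ) : Complex.exp (u * x * Complex.I) = Complex.exp (u * Complex.I * x) := by
    ring_nf
  have hcos (i : Fin n) : Complex.cosh (u * Complex.I * a i) = Complex.cos (u * a i) := by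
    rw [mul_right_comm, Complex.cosh_mul_I]
  simp only [charFun_apply_real, hexp, integral_walkMeasure, sum_exp_mul_signedSum, hcos,
    prod_mul_distrib]
  simp

end WalkMeasure

section Gaussian

lemma cdf_gaussianReal_eq_setIntegral (m : ℝ) {v : ℝ≥0} (hv : v ≠ 0) (t : ℝ) :
    cdf (gaussianReal m v) t = ∫ y in Set.Iic t, gaussianPDFReal m v y := by
  rw [cdf_eq_real, measureReal_def, gaussianReal_apply_eq_integral _ hv,
    ENNReal.toReal_ofReal (integral_nonneg fun y ↦ gaussianPDFReal_nonneg _ _ _)]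

lemma cdf_gaussianReal_eq_standard (m : ℝ) {v : ℝ≥0} (hv : v ≠ 0) (t : ℝ) :
    cdf (gaussianReal m v) t = cdf (gaussianReal 0 1) ((t - m) / √v) := by
  have hsqrt : 0 < √(v : ℝ) := sqrt_pos.2 (by positivity)
  have hmap : gaussianReal m v = (gaussianReal 0 1).map (fun x ↦ √v * x + m) := by
    have hscale : (gaussianReal 0 1).map (√v * ·) = gaussianReal 0 v := by
      rw [gaussianReal_map_const_mul, mul_zero, mul_one]
      congr 1
      exact NNReal.eq (sq_sqrt v.coe_nonneg)
    rw [← zero_add m, ← gaussianReal_map_add_const, ← hscale,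
      Measure.map_map (by fun_prop) (by fun_prop), zero_add]
    rfl
  rw [cdf_eq_real, cdf_eq_real, hmap, map_measureReal_apply (by fun_prop) measurableSet_Iic]
  congr 1
  ext x
  simp only [Set.mem_preimage, Set.mem_Iic, le_div_iff₀ hsqrt, le_sub_iff_add_le, mul_comm]

lemma setIntegral_gaussianDensity {n : ℕ} {a : Fin n → ℝ} (ha : 0 < ∑ i, a i ^ 2) (t : ℝ) :
    ∫ y in Set.Iic t, gaussianDensity a y =
      cdf (gaussianReal 0 1) (t / √(∑ i, a i ^ 2)) := by
  have hdensity (y : ℝ) :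
      gaussianDensity a y = gaussianPDFReal 0 (∑ i, a i ^ 2).toNNReal y := by
    simp [gaussianDensity, gaussianPDFReal, ha.le]
  have hv : (∑ i, a i ^ 2).toNNReal ≠ 0 := (toNNReal_pos.2 ha).ne'
  simp only [hdensity]
  rw [← cdf_gaussianReal_eq_setIntegral 0 hv, cdf_gaussianReal_eq_standard 0 hv, sub_zero,
    coe_toNNReal _ ha.le]

end Gaussian

lemma tendsto_const_mul_natCast_rpow_neg (c : ℝ) {p : ℝ} (hp : p < 0) :
    Tendsto (fun n : ℕ ↦ c * (n : ℝ) ^ p) atTop (𝓝 0) := by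
  have hrpow := (tendsto_rpow_neg_atTop (neg_pos.2 hp)).comp tendsto_natCast_atTop_atTop
  simpa using hrpow.const_mul c

section CentralLimit

lemma tendsto_charFun_walkMeasure {n : ℕ → ℕ} {b : ∀ k, Fin (n k) → ℝ} {κ : ℕ → ℝ}
    (hvar : ∀ k, ∑ i, b k i ^ 2 = 1) (hκ : Tendsto κ atTop (𝓝 0))
    (hb : ∀ k i, b k i ^ 2 ≤ κ k) (u : ℝ) :
    Tendsto (fun k ↦ charFun (walkMeasure (b k)) u) atTop (𝓝 (charFun (gaussianReal 0 1) u)) := by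
  have hgauss : charFun (gaussianReal 0 1) u = ((exp (-(u ^ 2 / 2)) : ℝ) : ℂ) := by
    simp [charFun_gaussianReal]
  simp only [charFun_walkMeasure, hgauss]
  refine (Complex.continuous_ofReal.tendsto _).comp (tendsto_iff_dist_tendsto_zero.2 ?_)
  refine squeeze_zero (fun _ ↦ dist_nonneg) (fun k ↦ ?_)
    (by simpa using (hκ.const_mul (u ^ 2)).mul_const (u ^ 2))
  have hsum : ∑ i, (u * b k i) ^ 2 = u ^ 2 := by
    simp only [mul_pow, ← mul_sum, hvar, mul_one]
  have hbound := abs_prod_cos_sub_exp_le (s := univ) (x := fun i ↦ u * b k i) (M := u ^ 2 * κ k)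
    fun i _ ↦ by rw [mul_pow]; gcongr; exact hb k i
  rwa [hsum] at hbound

theorem tendstoUniformly_cdf_walkMeasure {n : ℕ → ℕ} {b : ∀ k, Fin (n k) → ℝ} {κ : ℕ → ℝ}
    (hvar : ∀ k, ∑ i, b k i ^ 2 = 1) (hκ : Tendsto κ atTop (𝓝 0))
    (hb : ∀ k i, b k i ^ 2 ≤ κ k) :
    TendstoUniformly (fun k ↦ cdf (walkMeasure (b k))) (cdf (gaussianReal 0 1)) atTop := by
  let ν : ProbabilityMeasure ℝ := ⟨gaussianReal 0 1, inferInstance⟩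
  have : NullSingletonClass (ν : Measure ℝ) := nullSingletonClass_gaussianReal one_ne_zero
  exact tendstoUniformly_cdf_of_tendsto (μ := fun k ↦ ⟨walkMeasure (b k), inferInstance⟩) (ν := ν)
    (ProbabilityMeasure.tendsto_of_tendsto_charFun (tendsto_charFun_walkMeasure hvar hκ hb))

theorem exists_forall_abs_cdf_walkMeasure_sub_le {δ : ℝ} (hδ : 0 < δ) :
    ∃ κ > 0, ∀ (n : ℕ) (b : Fin n → ℝ), ∑ i, b i ^ 2 = 1 → (∀ i, b i ^ 2 ≤ κ) →
      ∀ t, |cdf (walkMeasure b) t - cdf (gaussianReal 0 1) t| ≤ δ := by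
  by_contra! hfar
  choose n b hvar hb t hfar using fun k : ℕ ↦ hfar (1 / (k + 1)) Nat.one_div_pos_of_nat
  have hunif := Metric.tendstoUniformly_iff.1
    (tendstoUniformly_cdf_walkMeasure hvar tendsto_one_div_add_atTop_nhds_zero_nat hb) δ hδ
  obtain ⟨k, hk⟩ := hunif.exists
  have hclose := hk (t k)
  rw [dist_comm] at hclose
  exact (hfar k).not_gt hclose

theorem stmt_18_general {δ : ℝ} (hδ : 0 < δ) :
    ∃ κ > 0, ∀ (n : ℕ) (a : Fin n → ℝ), a ≠ 0 → (∀ i, a i ^ 2 ≤ κ * ∑ j, a j ^ 2) →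
      ∀ t : ℝ,
        |((univ.filter fun η : Fin n → Bool ↦ signedSum a η ≤ t).card : ℝ) / 2 ^ n -
          ∫ y in Set.Iic t, gaussianDensity a y| ≤ δ := by
  obtain ⟨κ, hκ, hclose⟩ := exists_forall_abs_cdf_walkMeasure_sub_le hδ
  refine ⟨κ, hκ, fun n a ha hmax t ↦ ?_⟩
  have hpos : 0 < ∑ i, a i ^ 2 := by
    obtain ⟨i, hi⟩ := Function.ne_iff.1 ha
    exact sum_pos' (fun j _ ↦ sq_nonneg (a j)) ⟨i, mem_univ i, sq_pos_of_ne_zero hi⟩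
  set σ := √(∑ i, a i ^ 2)
  have hσ : 0 < σ := sqrt_pos.2 hpos
  have hσ_sq : σ ^ 2 = ∑ i, a i ^ 2 := sq_sqrt hpos.le
  have hvar : ∑ i, (a i / σ) ^ 2 = 1 := by
    simp only [div_pow, ← sum_div, hσ_sq, div_self hpos.ne']
  have hsmall (i : Fin n) : (a i / σ) ^ 2 ≤ κ := by
    rw [div_pow, hσ_sq, div_le_iff₀ hpos]
    exact hmax i
  rw [← cdf_walkMeasure, setIntegral_gaussianDensity hpos, ← cdf_walkMeasure_div a hσ]
  exact hclose n _ hvar hsmall (t / σ)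

end CentralLimit

theorem stmt_18 (c ε δ : ℝ) (hc : 0 < c) (hε : 0 < ε) (hδ : 0 < δ) :
    ∃ N : ℕ, ∀ n : ℕ, N ≤ n → ∀ a : Fin n → ℝ, (∀ i, 0 < a i) →
      ∀ A : ℝ, IsGreatest (Set.range a) A →
      A ^ 2 ≤ c * (n : ℝ) ^ (-(2/3 : ℝ) - ε) * ∑ i, (a i) ^ 2 →
      ∀ t : ℝ,
        |((Finset.univ.filter fun η : Fin n → Bool => signedSum a η ≤ t).card : ℝ)
            / 2 ^ n - ∫ y in Set.Iic t, gaussianDensity a y| ≤ δ := by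
  obtain ⟨κ, hκ, hclose⟩ := stmt_18_general hδ
  have hrate := tendsto_const_mul_natCast_rpow_neg c (by linarith : -(2/3 : ℝ) - ε < 0)
  obtain ⟨N, hN⟩ := eventually_atTop.1 (hrate.eventually_le_const hκ)
  refine ⟨N, fun n hn a ha A hA hAc ↦ hclose n a ?_ fun i ↦ ?_⟩
  · exact Function.ne_iff.2 (hA.1.imp fun i _ ↦ (ha i).ne')
  · calc a i ^ 2 ≤ A ^ 2 := pow_le_pow_left₀ (ha i).le (hA.2 ⟨i, rfl⟩) 2
      _ ≤ c * (n : ℝ) ^ (-(2/3 : ℝ) - ε) * ∑ j, a j ^ 2 := hAc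
      _ ≤ κ * ∑ j, a j ^ 2 := by gcongr; exact hN n hn
end
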